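/- For each pair (m,n) with m,n ≥ 1, there is at most one indefinite ℰ-lattice T of signature (m,n), up to isometry, satisfying T = θT′. -/

import Mathlib

noncomputable section

open ComplexConjugate

namespace Bimonster

/-- The primitive cube root of unity `ω = e^{2πi/3}`. -/
def ω : ℂ := Complex.exp (2 * (Real.pi : ℂ) * Complex.I / 3)

/-- `θ = ω - ω̄ = √-3`. -/
def θ : ℂ := ω - conj ω

/-- `ξ = e^{-πi/6}`. -/
def ξ : ℂ := Complex.exp (-((Real.pi : ℂ) * Complex.I) / 6)

/-- Membership in the ring of Eisenstein integers `ℰ = ℤ[ω] ⊆ ℂ`. -/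
def EisP (z : ℂ) : Prop := ∃ a b : ℤ, z = (a : ℂ) + (b : ℂ) * ω

/-- The units of the ring of Eisenstein integers. -/
def EisUnit (z : ℂ) : Prop :=
  z = 1 ∨ z = -1 ∨ z = ω ∨ z = -ω ∨ z = ω ^ 2 ∨ z = -ω ^ 2

/-- A Hermitian matrix has signature `(m,n)` if it is equivalent, by an invertible
change of basis, to the diagonal matrix with `m` entries `1` and `n` entries `-1`. -/
def HasSignature (m n : ℕ) (M : Matrix (Fin (m + n)) (Fin (m + n)) ℂ) : Prop :=
  ∃ P : Matrix (Fin (m + n)) (Fin (m + n)) ℂ, IsUnit P.det ∧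
    P.conjTranspose * M * P =
      Matrix.diagonal fun i : Fin (m + n) => if (i : ℕ) < m then (1 : ℂ) else -1

/-- `M` is the Gram matrix of an `ℰ`-lattice `T` satisfying `T = θT′`: its entries
lie in `ℰ`, it is Hermitian, and `θM⁻¹` is a matrix over `ℰ` invertible over `ℰ`
(equivalently `{θe′_i}` is an `ℰ`-basis of `T` for the dual basis `e′`). -/
def SelfDualTheta {k : ℕ} (M : Matrix (Fin k) (Fin k) ℂ) : Prop :=
  (∀ i j, EisP (M i j)) ∧ M.IsHermitian ∧
    (∀ i j, EisP ((θ • M⁻¹) i j)) ∧ EisUnit (θ • M⁻¹).det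

abbrev E := QuadraticAlgebra ℤ (-1) (-1)

def cj : E →+* E := starRingEnd E

@[simp] lemma cj_re (z : E) : (cj z).re = z.re - z.im := by
  simp [cj, starRingEnd_apply]; ring
@[simp] lemma cj_im (z : E) : (cj z).im = - z.im := by
  simp [cj, starRingEnd_apply]

lemma E_ext {z w : E} (h1 : z.re = w.re) (h2 : z.im = w.im) : z = w :=
  QuadraticAlgebra.ext h1 h2

@[simp] lemma cj_cj (z : E) : cj (cj z) = z := by
  apply E_ext <;> simp

@[simp] lemma E_one_re : (1 : E).re = 1 := rfl
@[simp] lemma E_one_im : (1 : E).im = 0 := rfl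
@[simp] lemma E_int_re (n : ℤ) : (n : E).re = n := rfl
@[simp] lemma E_int_im (n : ℤ) : (n : E).im = 0 := rfl

def th : E := ⟨1, 2⟩
@[simp] lemma th_re : th.re = 1 := rfl
@[simp] lemma th_im : th.im = 2 := rfl
@[simp] lemma cj_th : cj th = - th := by
  apply E_ext <;> simp

lemma th_mul_th : th * th = -3 := rfl

def nm (z : E) : ℤ := z.re ^ 2 - z.re * z.im + z.im ^ 2

lemma mul_cj (z : E) : z * cj z = (nm z : E) := by
  apply E_ext
  · rw [E_int_re]; simp [nm]; ring
  · rw [E_int_im]; simp; ring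
lemma cj_mul (z : E) : cj z * z = (nm z : E) := by rw [mul_comm, mul_cj]

lemma nm_nonneg (z : E) : 0 ≤ nm z := by
  unfold nm; nlinarith [sq_nonneg (z.re - z.im), sq_nonneg z.re, sq_nonneg z.im]

lemma nm_eq_zero {z : E} : nm z = 0 ↔ z = 0 := by
  constructor
  · intro h
    unfold nm at h
    have h1 : z.re = 0 := by
      by_contra h0
      have : 0 < z.re ^ 2 := by positivity
      nlinarith [sq_nonneg (z.re - 2 * z.im)]
    have h2 : z.im = 0 := by
      rw [h1] at h; simpa using h
    exact E_ext h1 h2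
  · rintro rfl; simp [nm]

@[simp] lemma nm_zero : nm 0 = 0 := nm_eq_zero.2 rfl
@[simp] lemma nm_one : nm 1 = 1 := by simp [nm]
lemma nm_pos {z : E} (h : z ≠ 0) : 0 < nm z :=
  lt_of_le_of_ne (nm_nonneg z) (fun h' => h (nm_eq_zero.1 h'.symm))
lemma nm_mul (z w : E) : nm (z * w) = nm z * nm w := by
  simp [nm]; ring
lemma nm_int (n : ℤ) : nm (n : E) = n ^ 2 := by simp [nm]
lemma nm_th : nm th = 3 := by simp [nm]
lemma nm_cj (z : E) : nm (cj z) = nm z := by simp [nm]; ring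

instance : NoZeroDivisors E where
  eq_zero_or_eq_zero_of_mul_eq_zero := by
    intro a b h
    have := nm_mul a b
    rw [h, nm_zero] at this
    rcases mul_eq_zero.1 this.symm with h | h
    · exact Or.inl (nm_eq_zero.1 h)
    · exact Or.inr (nm_eq_zero.1 h)

instance : IsDomain E := NoZeroDivisors.to_isDomain E

lemma E_int_inj {a b : ℤ} (h : (a : E) = b) : a = b := by
  have := congrArg QuadraticAlgebra.re h
  simpa using this

lemma th_ne : th ≠ 0 := by
  intro h; have := congrArg QuadraticAlgebra.re h; simp at this

lemma real_int {z : E} (h : cj z = z) : z = ((z.re : ℤ) : E) := by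
  have := congrArg QuadraticAlgebra.im h
  simp at this
  apply E_ext <;> simp
  omega

lemma round_int (a n : ℤ) (hn : n ≠ 0) : ∃ k : ℤ, 2 * |a - n * k| ≤ |n| := by
  rcases lt_or_gt_of_ne hn with h | h
  · refine ⟨(2 * a - n) / (2 * n), ?_⟩
    have h1 := Int.emod_add_mul_ediv (2 * a - n) (2 * n)
    have h2 := Int.emod_nonneg (2 * a - n) (show 2 * n ≠ 0 by omega)
    have h3 := Int.emod_lt_of_neg (2 * a - n) (show 2 * n < 0 by omega)
    rw [abs_of_neg h]
    have : 2 * n * ((2 * a - n) / (2 * n)) = 2 * (n * ((2 * a - n) / (2 * n))) := by ring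
    rcases abs_cases (a - n * ((2 * a - n) / (2 * n))) with h | h <;> omega
  · refine ⟨(2 * a + n) / (2 * n), ?_⟩
    have h1 := Int.emod_add_mul_ediv (2 * a + n) (2 * n)
    have h2 := Int.emod_nonneg (2 * a + n) (show 2 * n ≠ 0 by omega)
    have h3 := Int.emod_lt_of_pos (2 * a + n) (show 0 < 2 * n by omega)
    rw [abs_of_pos h]
    have : 2 * n * ((2 * a + n) / (2 * n)) = 2 * (n * ((2 * a + n) / (2 * n))) := by ring
    rcases abs_cases (a - n * ((2 * a + n) / (2 * n))) with h | h <;> omega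

lemma round_E (z : E) (n : ℤ) (hn : n ≠ 0) : ∃ w : E, 4 * nm (z - n * w) ≤ 3 * n ^ 2 := by
  obtain ⟨k, hk⟩ := round_int z.re n hn
  obtain ⟨l, hl⟩ := round_int z.im n hn
  refine ⟨⟨k, l⟩, ?_⟩
  simp only [nm, QuadraticAlgebra.re_sub, QuadraticAlgebra.im_sub, QuadraticAlgebra.re_mul,
    QuadraticAlgebra.im_mul, E_int_re, E_int_im]
  have e1 : z.re - (n * k + -1 * 0 * l) = z.re - n * k := by ring
  have e2 : z.im - (n * l + 0 * k + -1 * 0 * l) = z.im - n * l := by ring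
  rw [e1, e2]
  set a := z.re - n * k
  set b := z.im - n * l
  have ha : (2 * a) ^ 2 ≤ n ^ 2 := by
    apply sq_le_sq.2; rwa [abs_mul, abs_two]
  have hb : (2 * b) ^ 2 ≤ n ^ 2 := by
    apply sq_le_sq.2; rwa [abs_mul, abs_two]
  nlinarith [sq_nonneg (a + b)]

lemma euclid (a b : E) (hb : b ≠ 0) : ∃ q : E, nm (a - b * q) < nm b := by
  obtain ⟨w, hw⟩ := round_E (a * cj b) (nm b) (nm_pos hb).ne'
  refine ⟨w, ?_⟩
  have h1 : a * cj b - nm b * w = (a - b * w) * cj b := by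
    rw [← mul_cj]; ring
  rw [h1, nm_mul, nm_cj] at hw
  have := nm_pos hb
  nlinarith

instance : IsPrincipalIdealRing E where
  principal := by
    intro I
    by_cases hI : ∃ x ∈ I, x ≠ 0
    · obtain ⟨x, hx, hx0⟩ := hI
      let S : Set ℕ := {n | ∃ x ∈ I, x ≠ 0 ∧ (nm x).toNat = n}
      have hS : S.Nonempty := ⟨_, x, hx, hx0, rfl⟩
      obtain ⟨g, hg, hg0, hgn⟩ := Nat.sInf_mem hS
      refine ⟨g, ?_⟩
      apply le_antisymm
      · intro y hy
        obtain ⟨q, hq⟩ := euclid y g hg0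
        have hm : y - g * q ∈ I := I.sub_mem hy (I.mul_mem_right _ hg)
        by_cases h0 : y - g * q = 0
        · rw [Submodule.mem_span_singleton]
          exact ⟨q, by rw [smul_eq_mul, mul_comm]; exact (sub_eq_zero.1 h0).symm⟩
        · exfalso
          have : (nm (y - g * q)).toNat ∈ S := ⟨_, hm, h0, rfl⟩
          have := Nat.sInf_le this
          rw [← hgn] at this
          have := nm_nonneg (y - g * q)
          omega
      · rw [Submodule.span_le]; simpa using hg
    · refine ⟨0, ?_⟩
      push Not at hI
      rw [Submodule.span_singleton_eq_bot.2 rfl]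
      rw [eq_bot_iff]
      intro x hx; simpa using hI x hx

def rho : E →+* ZMod 3 where
  toFun z := (z.re : ZMod 3) + (z.im : ZMod 3)
  map_zero' := by simp
  map_one' := by simp
  map_add' := by intro x y; simp; ring
  map_mul' := by
    intro x y; simp
    have h3 : (3 : ZMod 3) = 0 := rfl
    linear_combination (- (x.im : ZMod 3) * y.im) * h3

lemma rho_def (z : E) : rho z = ((z.re + z.im : ℤ) : ZMod 3) := by simp [rho]
lemma rho_cj (z : E) : rho (cj z) = rho z := by
  have h3 : (3 : ZMod 3) = 0 := rfl
  simp [rho]; linear_combination (- (z.im : ZMod 3)) * h3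
@[simp] lemma rho_th : rho th = 0 := by simp [rho]; rfl
lemma rho_eq_zero {z : E} : rho z = 0 ↔ th ∣ z := by
  constructor
  · intro h
    rw [rho_def, ZMod.intCast_zmod_eq_zero_iff_dvd] at h
    obtain ⟨k, hk⟩ := h
    push_cast at hk
    refine ⟨⟨2 * k - z.re, k - z.re⟩, ?_⟩
    apply E_ext <;> simp <;> linarith
  · rintro ⟨w, rfl⟩; simp

lemma three_eq : (3 : E) = - (th * th) := by rw [th_mul_th]; ring

lemma nm_add_int_mul (z w : E) (n : ℤ) : n ∣ nm (z + n * w) - nm z := by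
  refine ⟨2 * z.re * w.re - z.re * w.im - z.im * w.re + 2 * z.im * w.im + n * nm w, ?_⟩
  simp [nm]; ring

lemma nm_aux (s t : ℤ) : nm (s + t * th : E) = s ^ 2 + 3 * t ^ 2 := by
  simp [nm]; ring

lemma residue_prime (p : ℕ) (hp : p.Prime) (h3 : p ≠ 3) (b : ℤ) :
    ∃ x : E, (p : ℤ) ∣ nm x + b := by
  have := Fact.mk hp
  rcases hp.eq_two_or_odd with h2 | h2
  · subst h2
    rcases Int.even_or_odd b with h | h
    · exact ⟨0, by simpa using h.two_dvd⟩
    · refine ⟨1, ?_⟩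
      obtain ⟨k, rfl⟩ := h
      exact ⟨k + 1, by simp; ring⟩
  · have hne : (3 : ZMod p) ≠ 0 := by
      intro h
      have : ((3 : ℕ) : ZMod p) = 0 := by exact_mod_cast h
      rw [ZMod.natCast_eq_zero_iff] at this
      exact h3 ((Nat.prime_dvd_prime_iff_eq hp Nat.prime_three).1 this)
    obtain ⟨u, v, huv⟩ := FiniteField.exists_root_sum_quadratic
      (f := (Polynomial.X ^ 2 : Polynomial (ZMod p)))
      (g := Polynomial.C 3 * Polynomial.X ^ 2 + Polynomial.C 0 * Polynomial.X + Polynomial.C (b : ZMod p))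
      (Polynomial.degree_X_pow 2) (Polynomial.degree_quadratic hne)
      (by rw [ZMod.card]; exact h2)
    simp at huv
    refine ⟨(u.val : ℤ) + (v.val : ℤ) * th, ?_⟩
    rw [← ZMod.intCast_zmod_eq_zero_iff_dvd]
    rw [nm_aux]
    push_cast
    simp only [ZMod.natCast_zmod_val]
    linear_combination huv

lemma residue (n : ℕ) (hs : Squarefree n) (h3 : ¬ 3 ∣ n) (b : ℤ) :
    ∃ x : E, (n : ℤ) ∣ nm x + b := by
  induction n using induction_on_primes with
  | zero => simp at h3
  | one => exact ⟨0, by simp⟩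
  | prime_mul p a hp ih =>
    obtain ⟨x1, h1⟩ := ih (hs.squarefree_of_dvd (Dvd.intro_left p rfl))
      (fun h => h3 (h.mul_left p))
    obtain ⟨x2, h2⟩ := residue_prime p hp (by rintro rfl; exact h3 (dvd_mul_right 3 a)) b
    have hc : Nat.Coprime p a := Nat.coprime_of_squarefree_mul hs
    have hc' : IsCoprime (p : ℤ) (a : ℤ) := Nat.isCoprime_iff_coprime.2 hc
    have hc2 := hc'
    obtain ⟨u, v, huv⟩ := hc2
    -- u p + v a = 1
    have huv'' : (u * p + v * a : E) = 1 := by exact_mod_cast congrArg (fun t : ℤ => (t : E)) huv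
    -- x = x1 u p + x2 v a : congruent to x1 mod a and x2 mod p
    have k1 : x1 * (u * p) + x2 * (v * a) = x1 + ((a : ℤ) : E) * (v * (x2 - x1)) := by
      linear_combination x1 * huv''
    have k2 : x1 * (u * p) + x2 * (v * a) = x2 + ((p : ℤ) : E) * (u * (x1 - x2)) := by
      linear_combination x2 * huv''
    refine ⟨x1 * (u * p) + x2 * (v * a), ?_⟩
    push_cast
    apply hc'.mul_dvd
    · have := dvd_add (nm_add_int_mul x2 (u * (x1 - x2)) p) h2
      rw [k2]; rwa [← add_assoc, sub_add_cancel] at this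
    · have := dvd_add (nm_add_int_mul x1 (v * (x2 - x1)) a) h1
      rw [k1]; rwa [← add_assoc, sub_add_cancel] at this

lemma symm_aux {b c : ℤ} (h : ∃ x y z : E, (x ≠ 0 ∨ y ≠ 0 ∨ z ≠ 0) ∧ nm x + b * nm y + c * nm z = 0) :
    ∃ x y z : E, (x ≠ 0 ∨ y ≠ 0 ∨ z ≠ 0) ∧ nm x + c * nm y + b * nm z = 0 := by
  obtain ⟨x, y, z, h1, h2⟩ := h
  exact ⟨x, z, y, by tauto, by linarith⟩

lemma step_aux (b c d : ℤ) (x0 : E) (hd : d ≠ 0) (h0 : nm x0 + b = c * d)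
    (h : ∃ x y z : E, (x ≠ 0 ∨ y ≠ 0 ∨ z ≠ 0) ∧ nm x + b * nm y + d * nm z = 0) :
    ∃ x y z : E, (x ≠ 0 ∨ y ≠ 0 ∨ z ≠ 0) ∧ nm x + b * nm y + c * nm z = 0 := by
  obtain ⟨x, y, z, h1, h2⟩ := h
  by_cases hz : z = 0
  · subst hz
    exact ⟨x, y, 0, h1, by simpa using h2⟩
  refine ⟨x * x0 - b * y, x + y * cj x0, d * z, Or.inr (Or.inr ?_), ?_⟩
  · apply mul_ne_zero _ hz
    intro h; exact hd (E_int_inj (by simpa using h))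
  · have e : nm (x * x0 - b * y) + b * nm (x + y * cj x0) = (nm x + b * nm y) * (nm x0 + b) := by
      simp [nm]; ring
    rw [e, h0, nm_mul, nm_int]
    linear_combination (c * d) * h2

lemma small_x (c b : ℤ) (hc0 : c ≠ 0) (hc1 : c.natAbs ≠ 1) (h3 : ¬ (3:ℤ) ∣ c)
    (hsq : ∀ p : ℕ, p.Prime → ¬ (p : ℤ) * p ∣ c) (hb : |b| ≤ |c|) :
    ∃ (x0 : E) (d : ℤ), nm x0 + b = c * d ∧ |d| < |c| := by
  by_cases h2 : c.natAbs = 2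
  · have hc2 : |c| = 2 := by rw [Int.abs_eq_natAbs, h2]; rfl
    rw [hc2] at hb ⊢
    have hb2 := abs_le.1 hb
    rcases (abs_eq (by norm_num)).1 hc2 with rfl | rfl
    all_goals
      rcases Int.even_or_odd b with ⟨k, hk⟩ | ⟨k, hk⟩
    · exact ⟨0, k, by simp; omega, by rw [abs_lt]; omega⟩
    · exact ⟨1, k + 1, by simp; omega, by rw [abs_lt]; omega⟩
    · exact ⟨0, -k, by simp; omega, by rw [abs_lt]; omega⟩
    · exact ⟨1, -k - 1, by simp; omega, by rw [abs_lt]; omega⟩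
  · have hsf : Squarefree c.natAbs := by
      rw [Nat.squarefree_iff_prime_squarefree]
      intro p hp h
      apply hsq p hp
      have := Int.natCast_dvd.2 h
      push_cast at this; exact this
    have h3' : ¬ 3 ∣ c.natAbs := by
      intro h; exact h3 (by omega)
    have h4 : 5 ≤ |c| := by
      have : c.natAbs ≠ 4 := by
        intro h; rw [h] at hsf; revert hsf; decide
      rw [Int.abs_eq_natAbs]; omega
    obtain ⟨x, hx⟩ := residue c.natAbs hsf h3' b
    obtain ⟨w, hw⟩ := round_E x c hc0
    have hx' : c ∣ nm (x - c * w) + b := by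
      have h1 := nm_add_int_mul x (-w) c
      have h2 : c ∣ nm x + b := Int.natAbs_dvd.1 hx
      have := dvd_add h1 h2
      have e : x - c * w = x + c * (-w) := by ring
      rw [e]; rwa [← add_assoc, sub_add_cancel] at this
    obtain ⟨d, hd⟩ := hx'
    refine ⟨x - c * w, d, hd, ?_⟩
    have hn := nm_nonneg (x - c * w)
    have : |c| * |d| ≤ nm (x - c * w) + |c| := by
      rw [← abs_mul, ← hd]
      calc _ ≤ |nm (x - c * w)| + |b| := abs_add_le _ _
        _ ≤ _ := by rw [abs_of_nonneg hn]; linarith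
    rw [← sq_abs c] at hw
    by_contra hlt
    push Not at hlt
    nlinarith

theorem iso_aux (k : ℕ) : ∀ b c : ℤ, b ≠ 0 → c ≠ 0 → ¬ (0 < b ∧ 0 < c) → b.natAbs + c.natAbs ≤ k →
    ∃ x y z : E, (x ≠ 0 ∨ y ≠ 0 ∨ z ≠ 0) ∧ nm x + b * nm y + c * nm z = 0 := by
  induction k with
  | zero => intro b c hb hc _ h; omega
  | succ k ih =>
    have main : ∀ b c : ℤ, b ≠ 0 → c ≠ 0 → ¬ (0 < b ∧ 0 < c) → b.natAbs + c.natAbs ≤ k + 1 →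
        b.natAbs ≤ c.natAbs →
        ∃ x y z : E, (x ≠ 0 ∨ y ≠ 0 ∨ z ≠ 0) ∧ nm x + b * nm y + c * nm z = 0 := by
      intro b c hb hc hs hk hle
      by_cases h1 : c.natAbs = 1
      · by_cases hb1 : b = -1
        · exact ⟨1, 1, 0, by simp, by simp [hb1]⟩
        · have : c = -1 := by omega
          exact ⟨1, 0, 1, by simp, by simp [this]⟩
      by_cases h3 : (3 : ℤ) ∣ c
      · obtain ⟨c1, rfl⟩ := h3
        obtain ⟨x, y, z, hn, h⟩ := ih b c1 hb (by omega) (by omega) (by omega)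
        refine ⟨th * x, th * y, z, ?_, ?_⟩
        · simpa [th_ne] using hn
        · rw [nm_mul, nm_mul, nm_th]; linear_combination 3 * h
      by_cases hsq : ∀ p : ℕ, p.Prime → ¬ (p : ℤ) * p ∣ c
      · obtain ⟨x0, d, hd, hlt⟩ := small_x c b hc h1 h3 hsq (by
          rw [Int.abs_eq_natAbs, Int.abs_eq_natAbs]; exact_mod_cast hle)
        by_cases hd0 : d = 0
        · exact ⟨x0, 1, 0, by simp, by rw [hd0] at hd; simp; linarith⟩
        · apply step_aux b c d x0 hd0 hd
          apply ih b d hb hd0 _ _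
          · rintro ⟨hb0, hd1⟩
            have := nm_nonneg x0
            have hc' : c < 0 := by omega
            nlinarith
          · rw [Int.abs_eq_natAbs, Int.abs_eq_natAbs] at hlt; omega
      · push Not at hsq
        obtain ⟨p, hp, c1, rfl⟩ := hsq
        have hp2 := hp.two_le
        have hp0 : (0 : ℤ) < p := by exact_mod_cast hp.pos
        have hc1 : c1 ≠ 0 := by rintro rfl; simp at hc
        obtain ⟨x, y, z, hn, h⟩ := ih b c1 hb hc1 (by
            rintro ⟨h, h'⟩; exact hs ⟨h, by positivity⟩) (by
            have e : ((p : ℤ) * p * c1).natAbs = p * p * c1.natAbs := by simp [Int.natAbs_mul]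
            rw [e] at hk
            have : 0 < c1.natAbs := by omega
            have h4 : 4 ≤ p * p := by nlinarith
            nlinarith)
        refine ⟨(p : ℤ) * x, (p : ℤ) * y, z, ?_, ?_⟩
        · have : ((p : ℤ) : E) ≠ 0 := by
            intro h; have := E_int_inj (a := p) (b := 0) (by simpa using h); omega
          rcases hn with h | h | h
          · exact Or.inl (mul_ne_zero this h)
          · exact Or.inr (Or.inl (mul_ne_zero this h))
          · exact Or.inr (Or.inr h)
        · rw [nm_mul, nm_mul, nm_int]; linear_combination (p : ℤ) ^ 2 * h
    intro b c hb hc hs hk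
    rcases le_total b.natAbs c.natAbs with h | h
    · exact main b c hb hc hs hk h
    · exact symm_aux (main c b hc hb (by tauto) (by omega) h)

theorem iso3 (a b c : ℤ) (ha : 0 < a) (hb : b < 0) (hc : c ≠ 0) :
    ∃ x y z : E, (x ≠ 0 ∨ y ≠ 0 ∨ z ≠ 0) ∧ a * nm x + b * nm y + c * nm z = 0 := by
  obtain ⟨x, y, z, hn, h⟩ := iso_aux _ (a * b) (a * c) (mul_ne_zero ha.ne' hb.ne)
    (mul_ne_zero ha.ne' hc) (by rintro ⟨h, _⟩; nlinarith) le_rfl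
  have ha' : (a : E) ≠ 0 := by
    intro h; have := E_int_inj (a := a) (b := 0) (by simpa using h); omega
  refine ⟨x, a * y, a * z, ?_, ?_⟩
  · rcases hn with h | h | h
    · exact Or.inl h
    · exact Or.inr (Or.inl (mul_ne_zero ha' h))
    · exact Or.inr (Or.inr (mul_ne_zero ha' h))
  · rw [nm_mul, nm_mul, nm_int]; linear_combination a * h

structure IsHerm {L : Type} [AddCommGroup L] [Module E L] (h : L → L →ₗ[E] E) : Prop where
  symm : ∀ x y, h y x = cj (h x y)

structure IsUni {L : Type} [AddCommGroup L] [Module E L] (h : L → L →ₗ[E] E) : Prop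
    extends IsHerm h where
  surj : ∀ f : L →ₗ[E] E, ∃ x, ∀ y, h x y = f y
  nondeg : ∀ x, (∀ y, h x y = 0) → x = 0

section
variable {L : Type} [AddCommGroup L] [Module E L] {h : L → L →ₗ[E] E}

lemma IsHerm.add_left (H : IsHerm h) (x y z : L) : h (x + y) z = h x z + h y z := by
  rw [H.symm z, map_add, map_add, ← H.symm, ← H.symm]
lemma IsHerm.sub_left (H : IsHerm h) (x y z : L) : h (x - y) z = h x z - h y z := by
  rw [H.symm z, map_sub, map_sub, ← H.symm, ← H.symm]
lemma IsHerm.smul_left (H : IsHerm h) (c : E) (x z : L) : h (c • x) z = cj c * h x z := by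
  rw [H.symm z, map_smul, smul_eq_mul, map_mul, ← H.symm]
lemma IsHerm.zero_left (H : IsHerm h) (z : L) : h 0 z = 0 := by
  rw [H.symm z, map_zero, map_zero]

def qn (h : L → L →ₗ[E] E) (x : L) : ℤ := (h x x).re

lemma IsHerm.qn_eq (H : IsHerm h) (x : L) : h x x = (qn h x : E) :=
  real_int (H.symm x x).symm

lemma int_ne {a : ℤ} (h : a ≠ 0) : (a : E) ≠ 0 := by
  intro h'; exact h (E_int_inj (by simpa using h'))

/-- combination of three orthogonal vectors -/
lemma iso_of_orth (H : IsHerm h) (x y z : L) (hx : 0 < qn h x) (hy : qn h y < 0) (hz : z ≠ 0)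
    (hxy : h x y = 0) (hxz : h x z = 0) (hyz : h y z = 0) : ∃ v, v ≠ 0 ∧ h v v = 0 := by
  by_cases hq : qn h z = 0
  · exact ⟨z, hz, by rw [H.qn_eq, hq]; simp⟩
  obtain ⟨a, b, c, hne, habc⟩ := iso3 _ _ _ hx hy hq
  have hyx : h y x = 0 := by rw [H.symm x, hxy, map_zero]
  have hzx : h z x = 0 := by rw [H.symm x, hxz, map_zero]
  have hzy : h z y = 0 := by rw [H.symm y, hyz, map_zero]
  refine ⟨a • x + b • y + c • z, ?_, ?_⟩
  · intro h0
    have h1 : h x (a • x + b • y + c • z) = a * qn h x := by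
      simp [hxy, hxz, H.qn_eq x]
    have h2 : h y (a • x + b • y + c • z) = b * qn h y := by
      simp [hyx, hyz, H.qn_eq y]
    have h3 : h z (a • x + b • y + c • z) = c * qn h z := by
      simp [hzx, hzy, H.qn_eq z]
    rw [h0, map_zero] at h1 h2 h3
    have := int_ne hx.ne'
    have := int_ne hy.ne
    have := int_ne hq
    simp_all
  · have : h (a • x + b • y + c • z) (a • x + b • y + c • z)
        = (qn h x * nm a + qn h y * nm b + qn h z * nm c : ℤ) := by
      simp only [H.add_left, H.smul_left, map_add, map_smul, hxy, hxz, hyz, hyx, hzx, hzy,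
        H.qn_eq x, H.qn_eq y, H.qn_eq z, smul_eq_mul]
      push_cast
      rw [← cj_mul, ← cj_mul, ← cj_mul]; ring
    rw [this, habc]; simp

lemma iso_rank2 (H : IsUni h) (B : Module.Basis (Fin 2) E L) (x y : L) (hx : 0 < qn h x)
    (hy : qn h y < 0) : ∃ v, v ≠ 0 ∧ h v v = 0 := by
  set e := B 0 with he
  set f := B 1 with hf
  obtain ⟨x0, hx0⟩ := H.surj (B.coord 0)
  obtain ⟨x1, hx1⟩ := H.surj (B.coord 1)
  have hrep : ∀ v : L, v = B.repr v 0 • e + B.repr v 1 • f := by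
    intro v
    have := B.sum_repr v
    rw [Fin.sum_univ_two] at this
    exact this.symm
  set α := qn h e with hα
  set γ := qn h f with hγ
  set β := h e f with hβ
  have hee : h e e = (α : E) := H.qn_eq e
  have hff : h f f = (γ : E) := H.qn_eq f
  have hfe : h f e = cj β := H.symm e f
  have form : ∀ s t : E, h (s • e + t • f) (s • e + t • f) =
      cj s * s * α + cj s * t * β + cj t * s * cj β + cj t * t * γ := by
    intro s t
    simp only [H.add_left, H.smul_left, map_add, map_smul, smul_eq_mul, hee, hff, hfe, ← hβ]
    ring
  have form2 : ∀ s t : E, (α : E) * h (s • e + t • f) (s • e + t • f) =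
      ((nm (α * s + β * t) + nm t * (α * γ - nm β) : ℤ) : E) := by
    intro s t
    rw [form]
    push_cast
    rw [← cj_mul, ← cj_mul, ← cj_mul]
    simp only [map_add, map_mul, map_intCast]
    ring
  have hdet : IsUnit (((α * γ - nm β : ℤ)) : E) := by
    have a1 := hx0 e
    have a2 := hx0 f
    have a3 := hx1 e
    have a4 := hx1 f
    rw [hrep x0] at a1 a2
    rw [hrep x1] at a3 a4
    simp only [H.add_left, H.smul_left, hee, hff, hfe, ← hβ] at a1 a2 a3 a4
    simp only [he, hf, Module.Basis.coord_apply, Module.Basis.repr_self] at a1 a2 a3 a4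
    simp at a1 a2 a3 a4
    generalize cj (B.repr x0 0) = p at *
    generalize cj (B.repr x0 1) = r at *
    generalize cj (B.repr x1 0) = s at *
    generalize cj (B.repr x1 1) = t at *
    refine IsUnit.of_mul_eq_one (p * t - r * s) ?_
    push_cast
    rw [← cj_mul]
    linear_combination (s * β + t * γ) * a1 + a4 - (s * α + t * cj β) * a2
  have hD : α * γ - nm β = 1 ∨ α * γ - nm β = -1 := by
    obtain ⟨u, hu⟩ := hdet.exists_right_inv
    have := congrArg nm hu
    rw [nm_mul, nm_int, nm_one] at this
    have : IsUnit (α * γ - nm β) := by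
      apply isUnit_of_dvd_one
      exact ⟨_, by rw [← this, sq, mul_assoc]⟩
    exact Int.isUnit_iff.1 this
  rcases hD with hD | hD
  · exfalso
    have key : ∀ v, 0 ≤ α * qn h v := by
      intro v
      have h1 := form2 (B.repr v 0) (B.repr v 1)
      rw [← hrep v, hD, H.qn_eq] at h1
      have h2 : α * qn h v = nm (α * (B.repr v 0) + β * (B.repr v 1)) + nm (B.repr v 1) * 1 :=
        E_int_inj (by rw [← h1]; push_cast; rfl)
      rw [h2]
      have := nm_nonneg (α * (B.repr v 0) + β * (B.repr v 1))
      have := nm_nonneg (B.repr v 1)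
      linarith
    have k1 := key x
    have k2 := key y
    have hα0 : α = 0 := by nlinarith
    rw [hα0] at hD
    have := nm_nonneg β
    linarith
  · by_cases hα0 : α = 0
    · exact ⟨e, B.ne_zero 0, by rw [hee, hα0]; simp⟩
    refine ⟨(1 - β) • e + (α : E) • f, ?_, ?_⟩
    · intro h0
      have := congrArg (fun v => B.repr v 1) h0
      simp [he, hf] at this
      exact hα0 this
    · have h1 := form2 (1 - β) α
      rw [hD] at h1
      have e1 : (α : E) * (1 - β) + β * α = α := by ring
      rw [e1, nm_int] at h1
      have e2 : α ^ 2 + α ^ 2 * -1 = 0 := by ring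
      rw [e2] at h1
      simpa [hα0, int_ne hα0] using h1

theorem exists_iso [Module.Free E L] [Module.Finite E L] (H : IsUni h) (x y : L) (hx : 0 < qn h x)
    (hy : qn h y < 0) : ∃ v, v ≠ 0 ∧ h v v = 0 := by
  set w : L := (qn h x : E) • y - (h x y) • x with hw
  have hxw : h x w = 0 := by
    simp only [hw, map_sub, map_smul, smul_eq_mul, H.qn_eq x]; ring
  have hwx : h w x = 0 := by rw [H.symm x, hxw, map_zero]
  have hqw : qn h w < 0 := by
    have h1 : h w w = ((qn h x * (qn h x * qn h y - nm (h x y)) : ℤ) : E) := by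
      have : h w w = qn h x * h w y := by
        conv_lhs => rw [hw, map_sub, map_smul, map_smul, ← hw, hwx]
        simp
      rw [this, hw, H.sub_left, H.smul_left, H.smul_left, H.qn_eq y]
      push_cast
      rw [← cj_mul, map_intCast]
    rw [H.qn_eq] at h1
    rw [E_int_inj h1]
    have := nm_nonneg (h x y)
    have : qn h x * qn h y < 0 := mul_neg_of_pos_of_neg hx hy
    apply mul_neg_of_pos_of_neg hx; linarith
  by_cases hz : ∃ z, z ≠ 0 ∧ h x z = 0 ∧ h w z = 0
  · obtain ⟨z, hz, h1, h2⟩ := hz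
    exact iso_of_orth H.toIsHerm x w z hx hqw hz hxw h1 h2
  · push Not at hz
    have hinj : Function.Injective ((h x).prod (h w)) := by
      rw [← LinearMap.ker_eq_bot, LinearMap.ker_eq_bot']
      intro m hm
      simp at hm
      by_contra hm0
      exact hz m hm0 hm.1 hm.2
    have hle := LinearMap.finrank_le_finrank_of_injective hinj
    have hli : LinearIndependent E ![x, w] := by
      rw [LinearIndependent.pair_iff]
      intro s t hst
      have h1 := congrArg (h x) hst
      have h2 := congrArg (h w) hst
      simp [hxw, hwx, H.qn_eq x, H.qn_eq w, int_ne hx.ne', int_ne hqw.ne] at h1 h2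
      exact ⟨h1, h2⟩
    have hge := hli.fintype_card_le_finrank
    have hfr : Module.finrank E L = 2 := by
      simp at hle hge; omega
    exact iso_rank2 H (Module.finBasisOfFinrankEq E L hfr) x y hx hy

theorem exists_hyp (H : IsUni h) (v : L) (hv : v ≠ 0) (hvv : h v v = 0) :
    ∃ e f, h e e = 0 ∧ h e f = 1 := by
  obtain ⟨g, hg⟩ := (IsPrincipalIdealRing.principal (LinearMap.range (h v)))
  have hmem : ∀ y, ∃ c : E, c * g = h v y := by
    intro y
    have : h v y ∈ LinearMap.range (h v) := ⟨y, rfl⟩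
    rw [hg, Submodule.mem_span_singleton] at this
    exact this
  have hg0 : g ≠ 0 := by
    rintro rfl
    apply hv
    apply H.nondeg
    intro y
    obtain ⟨c, hc⟩ := hmem y
    rw [← hc, mul_zero]
  choose c hc using hmem
  let f : L →ₗ[E] E :=
    { toFun := c
      map_add' := by
        intro a b
        apply mul_right_cancel₀ hg0
        rw [add_mul, hc, hc, hc, map_add]
      map_smul' := by
        intro a b
        apply mul_right_cancel₀ hg0
        rw [RingHom.id_apply, smul_eq_mul, mul_assoc, hc, hc, map_smul, smul_eq_mul] }
  obtain ⟨e, he⟩ := H.surj f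
  have he' : ∀ y, h e y * g = h v y := fun y => by rw [he]; exact hc y
  have hgm : g ∈ LinearMap.range (h v) := by
    rw [hg]; exact Submodule.mem_span_singleton_self g
  obtain ⟨w, hw⟩ := hgm
  refine ⟨e, w, ?_, ?_⟩
  · have h1 : h e v = 0 := by
      have := he' v
      rw [hvv] at this
      exact (mul_eq_zero.1 this).resolve_right hg0
    have h2 : h v e = 0 := by rw [H.symm e, h1, map_zero]
    have := he' e
    rw [h2] at this
    exact (mul_eq_zero.1 this).resolve_right hg0
  · apply mul_right_cancel₀ hg0
    rw [he', hw, one_mul]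

theorem exists_pm (H : IsUni h) (v : L) (hv : v ≠ 0) (hvv : h v v = 0) :
    ∃ u w, h u u = 1 ∧ h w w = -1 ∧ h u w = 0 := by
  obtain ⟨e, f, hee, hef⟩ := exists_hyp H v hv hvv
  have hfe : h f e = 1 := by rw [H.symm e, hef, map_one]
  set l : E := ⟨0, qn h f - 1⟩ with hl
  have hll : l + cj l = 1 - qn h f := by
    apply E_ext <;> simp [hl]
  have hu : h (f + l • e) (f + l • e) = 1 := by
    simp only [H.add_left, H.smul_left, map_add, map_smul, smul_eq_mul, hee, hef, hfe, H.qn_eq f]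
    linear_combination hll
  have heu : h e (f + l • e) = 1 := by simp [hee, hef]
  have hue : h (f + l • e) e = 1 := by simp [H.add_left, H.smul_left, hee, hfe]
  generalize f + l • e = u at *
  refine ⟨u, e - u, hu, ?_, ?_⟩
  · simp [H.sub_left, map_sub, hu, heu, hue, hee]
  · simp [hu, hue]

def resF (h : L → L →ₗ[E] E) (P : Submodule E L) : P → P →ₗ[E] E :=
  fun x => (h x).comp P.subtype

lemma resF_apply (P : Submodule E L) (x y : P) : resF h P x y = h x y := rfl

lemma resF_uni (H : IsUni h) (v : L) (ε : E) (hε : ε * ε = 1) (hv : h v v = ε) :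
    IsUni (resF h (LinearMap.ker (h v))) where
  symm x y := H.symm _ _
  surj f := by
    let pr : L →ₗ[E] LinearMap.ker (h v) := LinearMap.codRestrict _
      (LinearMap.id - (ε • (h v)).smulRight v) (by
        intro x; simp [hv]; linear_combination (- h v x) * hε)
    obtain ⟨x, hx⟩ := H.surj (f.comp pr)
    refine ⟨pr x, ?_⟩
    intro y
    have hy : h v y = 0 := y.2
    have hpy : pr y = y := by
      apply Subtype.ext; simp [pr, hy]
    have : h (pr x) y = h x y := by
      simp [pr, H.sub_left, H.smul_left, hy]
    rw [resF_apply, this, hx]; simp [hpy]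
  nondeg x hx := by
    apply Subtype.ext
    apply H.nondeg
    intro y
    have hxv : h x v = 0 := by rw [H.symm v, x.2, map_zero]
    have hm : y - (ε * h v y) • v ∈ LinearMap.ker (h v) := by
      simp [hv]; linear_combination (- h v y) * hε
    have := hx ⟨_, hm⟩
    rw [resF_apply] at this
    simpa [hxv] using this

lemma finrank_perp [Module.Free E L] [Module.Finite E L] (v : L) (hv : h v v ≠ 0) :
    Module.finrank E (LinearMap.ker (h v)) < Module.finrank E L := by
  have h1 := Submodule.finrank_quotient_add_finrank (LinearMap.ker (h v))
  rw [(h v).quotKerEquivRange.finrank_eq] at h1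
  have h2 : 0 < Module.finrank E (LinearMap.range (h v)) := by
    have : Nontrivial (LinearMap.range (h v)) := by
      refine ⟨⟨⟨h v v, v, rfl⟩, 0, ?_⟩⟩
      intro h; exact hv (congrArg Subtype.val h)
    exact Module.finrank_pos
  omega

def IsDiag (h : L → L →ₗ[E] E) : Prop :=
  ∃ (ι : Type) (_ : Fintype ι) (_ : DecidableEq ι) (e : ι → L) (ε : ι → ℤ),
    (∀ i, ε i = 1 ∨ ε i = -1) ∧ (∀ i j, h (e i) (e j) = if i = j then (ε i : E) else 0) ∧
    Submodule.span E (Set.range e) = ⊤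

lemma diag_step (H : IsUni h) (v : L) (s : ℤ) (hs : s = 1 ∨ s = -1) (hv : h v v = s)
    (hd : IsDiag (resF h (LinearMap.ker (h v)))) : IsDiag h := by
  obtain ⟨ι, _, _, e, ε, h1, h2, h3⟩ := hd
  refine ⟨Option ι, inferInstance, inferInstance, fun o => o.elim v (fun i => (e i : L)),
    fun o => o.elim s ε, ?_, ?_, ?_⟩
  · rintro (_ | i)
    · exact hs
    · exact h1 i
  · rintro (_ | i) (_ | j)
    · simpa using hv
    · simp
    · have : h v (e i) = 0 := (e i).2
      simp [H.symm v, this]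
    · simpa [resF_apply] using h2 i j
  · rw [eq_top_iff]
    intro x _
    have hss : (s : E) * s = 1 := by rcases hs with rfl | rfl <;> simp
    set P := Submodule.span E (Set.range (fun o : Option ι => o.elim v (fun i => (e i : L))))
    have hvP : v ∈ P := Submodule.subset_span ⟨none, rfl⟩
    have hm : x - ((s : E) * h v x) • v ∈ LinearMap.ker (h v) := by
      simp [hv]; linear_combination (- h v x) * hss
    have hk : LinearMap.ker (h v) ≤ P := by
      have : LinearMap.ker (h v) = (⊤ : Submodule E (LinearMap.ker (h v))).map
        (LinearMap.ker (h v)).subtype := by simp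
      rw [this, ← h3, Submodule.map_span, Submodule.span_le]
      rintro _ ⟨_, ⟨i, rfl⟩, rfl⟩
      exact Submodule.subset_span ⟨some i, rfl⟩
    have := P.add_mem (hk hm) (P.smul_mem ((s : E) * h v x) hvP)
    simpa using this

end

lemma polar {L : Type} [AddCommGroup L] [Module E L] {h : L → L →ₗ[E] E} (H : IsHerm h)
    (P : Submodule E L) (hP : ∀ z ∈ P, qn h z = 0) (z w : L) (hz : z ∈ P) (hw : w ∈ P) :
    h z w = 0 := by
  have key : ∀ w ∈ P, h z w + cj (h z w) = 0 := by
    intro w hw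
    have h1 := H.qn_eq (z + w)
    rw [hP _ (P.add_mem hz hw)] at h1
    simp only [H.add_left, map_add, H.qn_eq z, H.qn_eq w, hP z hz, hP w hw, H.symm z w] at h1
    simpa using h1
  have k1 := key w hw
  have k2 := key _ (P.smul_mem (⟨0, 1⟩ : E) hw)
  rw [map_smul, smul_eq_mul] at k2
  have k3 := congrArg QuadraticAlgebra.re k1
  have k4 := congrArg QuadraticAlgebra.re k2
  simp at k3 k4
  apply E_ext <;> simp <;> omega

theorem diag_aux (k : ℕ) : ∀ (L : Type) [AddCommGroup L] [Module E L] [Module.Free E L]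
    [Module.Finite E L] (h : L → L →ₗ[E] E), Module.finrank E L ≤ k → IsUni h →
    (∃ x, 0 < qn h x) → (∃ y, qn h y < 0) → IsDiag h := by
  induction k with
  | zero =>
    intro L _ _ _ _ h hk H ⟨x, hx⟩ _
    exfalso
    have : Module.finrank E L = 0 := by omega
    have := Module.finrank_zero_iff.1 this
    have : x = 0 := Subsingleton.elim _ _
    subst this
    simp [qn] at hx
  | succ k ih =>
    intro L _ _ _ _ h hk H ⟨x, hx⟩ ⟨y, hy⟩
    obtain ⟨v, hv, hvv⟩ := exists_iso H x y hx hy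
    obtain ⟨u, w, hu, hw, huw⟩ := exists_pm H v hv hvv
    have hwu : h w u = 0 := by rw [H.symm u, huw, map_zero]
    by_cases hz : ∃ z, h u z = 0 ∧ h w z = 0 ∧ qn h z ≠ 0
    · obtain ⟨z, hz1, hz2, hz3⟩ := hz
      have hqu : qn h u = 1 := by simp [qn, hu]
      have hqw : qn h w = -1 := by simp [qn, hw]
      rcases lt_or_gt_of_ne hz3 with hlt | hgt
      · apply diag_step H w (-1) (by simp) (by simp [hw])
        apply ih _ _ _ (resF_uni H w (-1) (by simp) hw)
        · exact ⟨⟨u, hwu⟩, by change 0 < qn h u; omega⟩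
        · exact ⟨⟨z, hz2⟩, hlt⟩
        · have := finrank_perp (h := h) w (by simp [hw]); omega
      · apply diag_step H u 1 (by simp) (by simp [hu])
        apply ih _ _ _ (resF_uni H u 1 (by simp) hu)
        · exact ⟨⟨z, hz1⟩, hgt⟩
        · exact ⟨⟨w, huw⟩, by change qn h w < 0; omega⟩
        · have := finrank_perp (h := h) u (by simp [hu]); omega
    · push Not at hz
      refine ⟨Bool, inferInstance, inferInstance, fun b => if b then u else w,
        fun b => if b then 1 else -1, ?_, ?_, ?_⟩
      · intro b; cases b <;> simp
      · rintro (_ | _) (_ | _) <;> simp [hu, hw, huw, hwu]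
      · let P : Submodule E L := LinearMap.ker (h u) ⊓ LinearMap.ker (h w)
        have hproj : ∀ x, x - h u x • u + h w x • w ∈ P := by
          intro x
          constructor <;> simp [hu, hw, huw, hwu]
        have hP : ∀ z ∈ P, z = 0 := by
          intro z hz'
          apply H.nondeg
          intro y
          have h1 := polar H.toIsHerm P (fun z hz' => hz z hz'.1 hz'.2) z _ hz' (hproj y)
          have h2 : h z u = 0 := by rw [H.symm u, hz'.1, map_zero]
          have h3 : h z w = 0 := by rw [H.symm w, hz'.2, map_zero]
          simpa [h2, h3] using h1
        rw [eq_top_iff]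
        intro x _
        have hx := hP _ (hproj x)
        have e : x = h u x • u - h w x • w := by
          rw [← sub_eq_zero, ← hx]; abel
        rw [e]
        exact Submodule.sub_mem _ (Submodule.smul_mem _ _ (Submodule.subset_span ⟨true, rfl⟩))
          (Submodule.smul_mem _ _ (Submodule.subset_span ⟨false, rfl⟩))

section
variable {L : Type} [AddCommGroup L] [Module E L] {h : L → L →ₗ[E] E}

def IsLag (h : L → L →ₗ[E] E) (W : Submodule E L) : Prop :=
  ∀ x, x ∈ W ↔ ∀ w ∈ W, rho (h x w) = 0

lemma IsLag.th_mem (H : IsHerm h) {W : Submodule E L} (hW : IsLag h W) (x : L) : th • x ∈ W := by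
  rw [hW]; intro w _; rw [H.smul_left]; simp

lemma rho_int_zmod (n : ℤ) : rho (n : E) = (n : ZMod 3) := by simp

lemma zmod3_cases (a : ZMod 3) : a = 0 ∨ a = 1 ∨ a = -1 := by revert a; decide

lemma lift_norm (H : IsUni h) (e f : L) (hee : h e e = 0) (hef : h e f = 1) (r0 : L) (ε : ℤ)
    (hε : rho (h r0 r0) = (ε : ZMod 3)) :
    ∃ t : L, h (r0 + th • t) (r0 + th • t) = (ε : E) := by
  have hfe : h f e = 1 := by rw [H.symm e, hef, map_one]
  -- step 1
  have s1 : ∃ m : E, h (r0 + th • (m • f)) e = 1 ∨ h (r0 + th • (m • f)) e = -1 ∨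
      h (r0 + th • (m • f)) e = th := by
    have hform : ∀ m : E, h (r0 + th • (m • f)) e = h r0 e - th * cj m := by
      intro m
      rw [H.add_left, H.smul_left, H.smul_left, hfe, cj_th]; ring
    have hx : ∀ c : E, rho (h r0 e) = rho c → ∃ m : E, h (r0 + th • (m • f)) e = c := by
      intro c hc
      have : rho (h r0 e - c) = 0 := by rw [map_sub, hc, sub_self]
      obtain ⟨k, hk⟩ := rho_eq_zero.1 this
      exact ⟨cj k, by rw [hform, cj_cj, ← hk]; ring⟩
    rcases zmod3_cases (rho (h r0 e)) with h0 | h0 | h0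
    · obtain ⟨m, hm⟩ := hx th (by rw [h0, rho_th]); exact ⟨m, by tauto⟩
    · obtain ⟨m, hm⟩ := hx 1 (by rw [h0, map_one]); exact ⟨m, by tauto⟩
    · obtain ⟨m, hm⟩ := hx (-1) (by rw [h0, map_neg, map_one]); exact ⟨m, by tauto⟩
  obtain ⟨m, hm⟩ := s1
  have hr1 : rho (h (r0 + th • (m • f)) (r0 + th • (m • f))) = ε := by
    simp only [H.add_left, H.smul_left, map_add, map_smul, smul_eq_mul, map_mul, hε, cj_th, map_neg,
      rho_th]
    ring
  obtain ⟨r1, hr1e⟩ : ∃ r1, r1 = r0 + th • (m • f) := ⟨_, rfl⟩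
  rw [← hr1e] at hm hr1
  rw [H.qn_eq, rho_int_zmod] at hr1
  have hdiv : (3 : ℤ) ∣ ε - qn h r1 := by
    have := (ZMod.intCast_eq_intCast_iff_dvd_sub (qn h r1) ε 3).1 hr1
    simpa using this
  obtain ⟨j, hj⟩ := hdiv
  have s2 : ∃ l : E, th * l * h r1 e + cj (th * l * h r1 e) = (3 * j : ℤ) := by
    rcases hm with h1 | h1 | h1
    · refine ⟨⟨0, -j⟩, ?_⟩; rw [h1]; apply E_ext
      · rw [E_int_re]; simp; try ring
      · rw [E_int_im]; simp; try ring
    · refine ⟨⟨0, j⟩, ?_⟩; rw [h1]; apply E_ext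
      · rw [E_int_re]; simp; try ring
      · rw [E_int_im]; simp; try ring
    · refine ⟨⟨0, j⟩, ?_⟩; rw [h1]; apply E_ext
      · rw [E_int_re]; simp; try ring
      · rw [E_int_im]; simp; try ring
  obtain ⟨l, hl⟩ := s2
  refine ⟨m • f + l • e, ?_⟩
  have e1 : r0 + th • (m • f + l • e) = r1 + (th * l) • e := by
    rw [hr1e, smul_add, smul_smul th l e, add_assoc]
  rw [e1]
  have her : h e r1 = cj (h r1 e) := H.symm _ _
  simp only [H.add_left, H.smul_left, map_add, map_smul, smul_eq_mul, hee, her, H.qn_eq r1]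
  rw [map_mul] at hl
  have : (ε : E) = qn h r1 + ((3 * j : ℤ) : E) := by rw [← hj]; push_cast; ring
  rw [this, ← hl]; ring

def reflMap (h : L → L →ₗ[E] E) (r : L) (ε : E) : L →ₗ[E] L :=
  LinearMap.id - ((2 * ε) • (h r)).smulRight r

lemma reflMap_apply (r : L) (ε : E) (x : L) : reflMap h r ε x = x - (2 * ε * h r x) • r := by
  simp [reflMap, mul_assoc]

lemma reflMap_invol (r : L) (ε : E) (hε : ε * ε = 1) (hr : h r r = ε) (x : L) :
    reflMap h r ε (reflMap h r ε x) = x := by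
  have : h r (x - (2 * ε * h r x) • r) = - h r x := by
    rw [map_sub, map_smul, hr, smul_eq_mul]; linear_combination (-2 * h r x) * hε
  rw [reflMap_apply, reflMap_apply, this]
  module

lemma reflMap_isom (H : IsHerm h) (r : L) (ε : E) (hε : ε * ε = 1) (hεc : cj ε = ε)
    (hr : h r r = ε) (x y : L) :
    h (reflMap h r ε x) (reflMap h r ε y) = h x y := by
  rw [reflMap_apply, reflMap_apply]
  simp only [H.sub_left, map_sub, H.smul_left, map_smul, smul_eq_mul, hr, map_mul, hεc, H.symm r x,
    map_ofNat]
  linear_combination (4 * ε * h r y * cj (h r x)) * hε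

def reflE (h : L → L →ₗ[E] E) (r : L) (ε : E) (hε : ε * ε = 1) (hr : h r r = ε) : L ≃ₗ[E] L :=
  LinearEquiv.ofInvolutive (reflMap h r ε) (reflMap_invol r ε hε hr)

lemma IsLag.map {L' : Type} [AddCommGroup L'] [Module E L'] {h' : L' → L' →ₗ[E] E}
    (g : L ≃ₗ[E] L') (hg : ∀ x y, h' (g x) (g y) = h x y) {W : Submodule E L} (hW : IsLag h W) :
    IsLag h' (W.map (g : L →ₗ[E] L')) := by
  intro x
  obtain ⟨y, rfl⟩ := g.surjective x
  constructor
  · rintro ⟨z, hz, hzy⟩ _ ⟨w, hw, rfl⟩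
    have : z = y := g.injective hzy
    subst this
    simp only [LinearEquiv.coe_coe, hg]
    exact (hW z).1 hz w hw
  · intro hx
    refine ⟨y, (hW y).2 ?_, rfl⟩
    intro w hw
    have := hx (g w) ⟨w, hw, rfl⟩
    rwa [hg] at this

theorem lag_trans [IsNoetherian E L] (H : IsUni h) (e f : L) (hee : h e e = 0) (hef : h e f = 1)
    (V : Submodule E L) (hV : IsLag h V) (D : Submodule E L) :
    ∀ W : Submodule E L, IsLag h W → D = W ⊓ V →
      ∃ g : L ≃ₗ[E] L, (∀ x y, h (g x) (g y) = h x y) ∧ W.map (g : L →ₗ[E] L) = V := by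
  induction D using WellFoundedGT.induction with
  | ind D ih =>
    intro W hW hD
    by_cases hle : W ≤ V
    · refine ⟨LinearEquiv.refl E L, fun _ _ => rfl, ?_⟩
      have : W = V := by
        apply le_antisymm hle
        intro x hx
        rw [hW]
        intro w hw
        exact (hV x).1 hx w (hle hw)
      rw [← this]
      ext x; simp
    · obtain ⟨x0, hx0, hx0V⟩ := SetLike.not_le_iff_exists.1 hle
      have : ∃ y ∈ V, rho (h x0 y) ≠ 0 := by
        by_contra hcon
        push Not at hcon
        exact hx0V ((hV x0).2 hcon)
      obtain ⟨y0, hy0, hxy⟩ := this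
      have hxx := (hW x0).1 hx0 x0 hx0
      have hyy := (hV y0).1 hy0 y0 hy0
      have hyx : rho (h y0 x0) = rho (h x0 y0) := by rw [H.symm x0 y0, rho_cj]
      have hq : rho (h (x0 - y0) (x0 - y0)) = rho (h x0 y0) := by
        simp only [H.sub_left, map_sub, hxx, hyy, hyx]
        generalize rho (h x0 y0) = a
        revert a; decide
      obtain ⟨ε, hε, hεr⟩ : ∃ ε : ℤ, ε * ε = 1 ∧ rho (h x0 y0) = (ε : ZMod 3) := by
        rcases zmod3_cases (rho (h x0 y0)) with h0 | h0 | h0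
        · exact absurd h0 hxy
        · exact ⟨1, rfl, by simpa using h0⟩
        · exact ⟨-1, rfl, by simpa using h0⟩
      obtain ⟨t, ht⟩ := lift_norm H e f hee hef (x0 - y0) ε (by rw [hq, hεr])
      have hεE : (ε : E) * ε = 1 := by exact_mod_cast congrArg (fun n : ℤ => (n : E)) hε
      have hr' : ∀ z, rho (h (x0 - y0 + th • t) z) = rho (h x0 z) - rho (h y0 z) := by
        intro z
        simp only [H.add_left, H.sub_left, H.smul_left, map_add, map_sub, map_mul, cj_th, map_neg,
          rho_th]
        ring
      obtain ⟨r, hr⟩ : ∃ r, r = x0 - y0 + th • t := ⟨_, rfl⟩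
      rw [← hr] at ht hr'
      let g := reflE h r ε hεE ht
      have hg : ∀ x, g x = x - (2 * ε * h r x) • r := fun x => reflMap_apply r ε x
      have hgg : ∀ x, g (g x) = x := reflMap_invol r ε hεE ht
      have hgi : ∀ x y, h (g x) (g y) = h x y :=
        reflMap_isom H.toIsHerm r ε hεE (by simp) ht
      have hWg := hW.map (h' := h) g hgi
      have hmem : ∀ x, g x ∈ W → x ∈ W.map (g : L →ₗ[E] L) := fun x hx => ⟨g x, hx, hgg x⟩
      have hy0W : g y0 ∈ W := by
        rw [hg, hr]
        have hc : rho (1 + 2 * ε * h r y0) = 0 := by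
          simp only [map_add, map_mul, hr', hyy, map_one, map_ofNat, map_intCast, hεr]
          have : (ε : ZMod 3) * ε = 1 := by exact_mod_cast congrArg (fun n : ℤ => (n : ZMod 3)) hε
          linear_combination 2 * this + (by rfl : (3 : ZMod 3) = 0)
        obtain ⟨k, hk⟩ := rho_eq_zero.1 hc
        rw [← hr]
        have e1 : y0 - (2 * ε * h r y0) • r = x0 + th • (t - k • r) := by
          have : 2 * ε * h r y0 = th * k - 1 := by rw [← hk]; ring
          rw [this]
          have : y0 = x0 + th • t - r := by rw [hr]; abel
          rw [this]; module
        rw [e1]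
        exact W.add_mem hx0 (hW.th_mem H.toIsHerm _)
      have hlt : D < W.map (g : L →ₗ[E] L) ⊓ V := by
        rw [hD]
        rw [SetLike.lt_iff_le_and_exists]
        refine ⟨?_, y0, ⟨hmem _ hy0W, hy0⟩, ?_⟩
        · rintro x ⟨hxW, hxV⟩
          refine ⟨hmem x ?_, hxV⟩
          have hc : rho (h r x) = 0 := by
            rw [hr', (hW x0).1 hx0 x hxW, (hV y0).1 hy0 x hxV, sub_zero]
          obtain ⟨k, hk⟩ := rho_eq_zero.1 hc
          have : g x = x - th • ((2 * ε * k) • r) := by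
            rw [hg, hk, smul_smul]; congr 2; ring
          rw [this]
          exact W.sub_mem hxW (hW.th_mem H.toIsHerm _)
        · rintro ⟨hyW, _⟩
          exact hxy ((hW x0).1 hx0 y0 hyW)
      obtain ⟨g2, hg2, hg2V⟩ := ih _ hlt _ hWg rfl
      refine ⟨g.trans g2, fun x y => by simp [hg2, hgi], ?_⟩
      rw [← hg2V, ← Submodule.map_comp]
      rfl

/-- theta modular forms -/
structure IsMod (h : L → L →ₗ[E] E) : Prop extends IsHerm h where
  dvd : ∀ x y, th ∣ h x y
  surj : ∀ f : L →ₗ[E] E, ∃ x, ∀ y, h x y = th * f y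
  nondeg : ∀ x, (∀ y, h x y = 0) → x = 0

lemma IsMod.three_dvd (H : IsMod h) (x : L) : (3 : E) ∣ h x x := by
  rw [H.qn_eq]
  have h1 := rho_eq_zero.2 (H.dvd x x)
  rw [H.qn_eq, rho_int_zmod, ZMod.intCast_zmod_eq_zero_iff_dvd] at h1
  obtain ⟨k, hk⟩ := h1
  exact ⟨k, by rw [hk]; push_cast; rfl⟩

lemma exists_max [IsNoetherian E L] (H : IsMod h) : ∃ S : Submodule E L, (∀ x, th • x ∈ S) ∧
    (∀ x ∈ S, ∀ y ∈ S, (3 : E) ∣ h x y) ∧ (∀ x, (∀ y ∈ S, (3 : E) ∣ h x y) → x ∈ S) := by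
  let C : Set (Submodule E L) := {S | (∀ x, th • x ∈ S) ∧ (∀ x ∈ S, ∀ y ∈ S, (3 : E) ∣ h x y)}
  have hne : C.Nonempty := by
    refine ⟨LinearMap.range (LinearMap.lsmul E L th), fun x => ⟨x, rfl⟩, ?_⟩
    rintro _ ⟨x, rfl⟩ _ ⟨y, rfl⟩
    refine ⟨h x y, ?_⟩
    simp only [LinearMap.lsmul_apply, H.smul_left, map_smul, smul_eq_mul, cj_th, three_eq]; ring
  obtain ⟨S, hS, hmax⟩ := (wellFounded_gt (α := Submodule E L)).has_min C hne
  refine ⟨S, hS.1, hS.2, ?_⟩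
  intro x hx
  by_contra hxS
  apply hmax (S ⊔ Submodule.span E {x}) _ _
  · refine ⟨fun y => Submodule.mem_sup_left (hS.1 y), ?_⟩
    intro a ha b hb
    obtain ⟨s, hs, _, hu, rfl⟩ := Submodule.mem_sup.1 ha
    obtain ⟨t, ht, _, hv, rfl⟩ := Submodule.mem_sup.1 hb
    obtain ⟨c, rfl⟩ := Submodule.mem_span_singleton.1 hu
    obtain ⟨d, rfl⟩ := Submodule.mem_span_singleton.1 hv
    simp only [H.add_left, H.smul_left, map_add, map_smul, smul_eq_mul]
    have hsx : (3 : E) ∣ h s x := by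
      obtain ⟨k, hk⟩ := hx s hs
      rw [H.symm x, hk, map_mul, map_ofNat]; exact dvd_mul_right _ _
    have q1 := hS.2 s hs t ht
    have q2 := hx t ht
    have q3 := H.three_dvd x
    obtain ⟨a1, q1⟩ := q1
    obtain ⟨a2, q2⟩ := q2
    obtain ⟨a3, q3⟩ := q3
    obtain ⟨a4, q4⟩ := hsx
    rw [q1, q2, q3, q4]
    refine ⟨a1 + d * a4 + cj c * a2 + cj c * d * a3, ?_⟩
    ring
  · change S < _
    rw [SetLike.lt_iff_le_and_exists]
    exact ⟨le_sup_left, x, Submodule.mem_sup_right (Submodule.mem_span_singleton_self x), hxS⟩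

lemma three_ne : (3 : E) ≠ 0 := by
  have := int_ne (a := 3) (by norm_num); exact_mod_cast this

theorem exists_over [IsNoetherian E L] (H : IsMod h) :
    ∃ (S : Submodule E L) (k : S → S →ₗ[E] E) (j : L →ₗ[E] S), IsUni k ∧
      (∀ x y : S, 3 * k x y = h x y) ∧ (∀ x, (j x : L) = th • x) ∧
      (∀ x y, k (j x) (j y) = h x y) ∧ IsLag k (LinearMap.range j) := by
  obtain ⟨S, hS1, hS2, hS3⟩ := exists_max H
  have hex : ∀ x y : S, ∃ c : E, 3 * c = h x y := fun x y => by
    obtain ⟨c, hc⟩ := hS2 x x.2 y y.2; exact ⟨c, hc.symm⟩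
  choose c hc using hex
  let k : S → S →ₗ[E] E := fun x =>
    { toFun := c x
      map_add' := by
        intro a b
        apply mul_left_cancel₀ three_ne
        rw [mul_add, hc, hc, hc]; simp
      map_smul' := by
        intro a b
        apply mul_left_cancel₀ three_ne
        rw [RingHom.id_apply, smul_eq_mul, mul_left_comm, hc, hc]; simp }
  have hk : ∀ x y : S, 3 * k x y = h x y := hc
  let j : L →ₗ[E] S := LinearMap.codRestrict S (LinearMap.lsmul E L th) (fun x => hS1 x)
  have hj : ∀ x, (j x : L) = th • x := fun x => rfl
  have hkj : ∀ x y, k (j x) (j y) = h x y := by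
    intro x y
    apply mul_left_cancel₀ three_ne
    rw [hk, hj, hj, H.smul_left, map_smul, smul_eq_mul, cj_th, three_eq]; ring
  have hkj' : ∀ (x : S) (y : L), k x (j y) * (- th) = h x y := by
    intro x y
    apply mul_left_cancel₀ (mul_ne_zero th_ne th_ne)
    have := hk x (j y)
    rw [hj, map_smul, smul_eq_mul, three_eq] at this
    linear_combination th * this
  have hu : IsUni k := by
    refine ⟨⟨?_⟩, ?_, ?_⟩
    · intro x y
      apply mul_left_cancel₀ three_ne
      rw [hk, H.symm x, ← hk x y, map_mul, map_ofNat]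
    · intro f
      obtain ⟨x, hx⟩ := H.surj (f.comp j)
      have hx3 : ∀ y : S, h (-x) y = 3 * f y := by
        intro y
        have h1 := hx y
        have h2 : j y = th • y := by apply Subtype.ext; rw [hj]; rfl
        rw [LinearMap.comp_apply, h2, map_smul, smul_eq_mul] at h1
        have h3 := H.smul_left (-1) x y
        simp only [neg_smul, one_smul, map_neg, map_one] at h3
        rw [h3, h1, three_eq]; ring
      refine ⟨⟨-x, hS3 _ (fun y hy => ⟨f ⟨y, hy⟩, hx3 ⟨y, hy⟩⟩)⟩, ?_⟩
      intro y
      apply mul_left_cancel₀ three_ne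
      rw [hk, hx3]
    · intro x hx
      apply Subtype.ext
      apply H.nondeg
      intro y
      rw [← hkj', hx, zero_mul]
  refine ⟨S, k, j, hu, hk, hj, hkj, ?_⟩
  intro x
  constructor
  · rintro ⟨y, rfl⟩ _ ⟨z, rfl⟩
    rw [hkj]
    exact rho_eq_zero.2 (H.dvd _ _)
  · intro hx
    have hx' : ∀ y, ∃ c, th * c = k x (j y) := by
      intro y
      obtain ⟨c, hc⟩ := rho_eq_zero.1 (hx (j y) ⟨y, rfl⟩)
      exact ⟨c, hc.symm⟩
    choose f hf using hx'
    let F : L →ₗ[E] E :=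
      { toFun := f
        map_add' := by
          intro a b
          apply mul_left_cancel₀ th_ne
          rw [mul_add, hf, hf, hf]; simp
        map_smul' := by
          intro a b
          apply mul_left_cancel₀ th_ne
          rw [RingHom.id_apply, smul_eq_mul, mul_left_comm, hf, hf]; simp }
    obtain ⟨z, hz⟩ := H.surj F
    refine ⟨z, ?_⟩
    have h0 : ∀ y, k (j z - x) (j y) = 0 := by
      intro y
      rw [hu.sub_left, hkj, hz]
      change th * f y - _ = 0
      rw [hf, sub_self]
    rw [← sub_eq_zero]
    apply Subtype.ext
    apply H.nondeg
    intro y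
    rw [← hkj', h0, zero_mul]

end

lemma diag_basis {L : Type} [AddCommGroup L] [Module E L] {h : L → L →ₗ[E] E} 
    {ι : Type} [Fintype ι] [DecidableEq ι] (e : ι → L) (ε : ι → ℤ) (h1 : ∀ i, ε i = 1 ∨ ε i = -1)
    (h2 : ∀ i j, h (e i) (e j) = if i = j then (ε i : E) else 0)
    (h3 : Submodule.span E (Set.range e) = ⊤) : ∃ B : Module.Basis ι E L, ∀ i, B i = e i := by
  have hli : LinearIndependent E e := by
    rw [Fintype.linearIndependent_iff]
    intro g hg i
    have := congrArg (h (e i)) hg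
    simp [h2] at this
    rcases this with h | h
    · exact h
    · exfalso; rcases h1 i with h' | h' <;> rw [h'] at h <;> simp at h
  exact ⟨Module.Basis.mk hli (by rw [h3]), fun i => by simp⟩

theorem diag_isom {L L' : Type} [AddCommGroup L] [Module E L] {h : L → L →ₗ[E] E}
    [AddCommGroup L'] [Module E L'] {h' : L' → L' →ₗ[E] E} (H : IsHerm h) (H' : IsHerm h')
    {ι ι' : Type} [Fintype ι] [DecidableEq ι] [Fintype ι'] [DecidableEq ι']
    (B : Module.Basis ι E L) (B' : Module.Basis ι' E L') (ε : ι → ℤ) (ε' : ι' → ℤ)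
    (h2 : ∀ i j, h (B i) (B j) = if i = j then (ε i : E) else 0)
    (h2' : ∀ i j, h' (B' i) (B' j) = if i = j then (ε' i : E) else 0)
    (σ : ι ≃ ι') (hσ : ∀ i, ε' (σ i) = ε i) :
    ∃ g : L ≃ₗ[E] L', ∀ x y, h' (g x) (g y) = h x y := by
  refine ⟨B.equiv B' σ, ?_⟩
  have key : ∀ i y, h' (B.equiv B' σ (B i)) (B.equiv B' σ y) = h (B i) y := by
    intro i
    have : (h' (B.equiv B' σ (B i))).comp (B.equiv B' σ : L →ₗ[E] L') = h (B i) := by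
      apply B.ext
      intro j
      simp [h2, h2', hσ]
    intro y
    exact LinearMap.congr_fun this y
  intro x y
  have key2 : ∀ i, h' (B.equiv B' σ y) (B.equiv B' σ (B i)) = h y (B i) := by
    intro i
    rw [H'.symm, key, ← H.symm]
  have : (h' (B.equiv B' σ y)).comp (B.equiv B' σ : L →ₗ[E] L') = h y := B.ext key2
  have := LinearMap.congr_fun this x
  rw [H'.symm, H.symm y x, ← this]; rfl

theorem isom_of_sig {ι ι' : Type} [Fintype ι] [Fintype ι'] (ε : ι → ℤ) (ε' : ι' → ℤ)
    (h1 : ∀ i, ε i = 1 ∨ ε i = -1) (h1' : ∀ i, ε' i = 1 ∨ ε' i = -1)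
    (hp : Fintype.card {i // ε i = 1} = Fintype.card {i // ε' i = 1})
    (hm : Fintype.card {i // ε i = -1} = Fintype.card {i // ε' i = -1}) :
    ∃ σ : ι ≃ ι', ∀ i, ε' (σ i) = ε i := by
  have hm' : Fintype.card {i // ¬ ε i = 1} = Fintype.card {i // ¬ ε' i = 1} := by
    convert hm using 1 <;> apply Fintype.card_congr <;> apply Equiv.subtypeEquivRight <;> intro i
    · have := h1 i; omega
    · have := h1' i; omega
  let a := Fintype.equivOfCardEq hp
  let b := Fintype.equivOfCardEq hm'
  refine ⟨(Equiv.sumCompl (fun i => ε i = 1)).symm.trans ((Equiv.sumCongr a b).trans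
    (Equiv.sumCompl (fun i => ε' i = 1))), ?_⟩
  intro i
  by_cases hi : ε i = 1
  · simp [Equiv.sumCompl_symm_apply_of_pos, hi]
    exact (a ⟨i, hi⟩).2
  · simp [Equiv.sumCompl_symm_apply_of_neg, hi]
    have := (b ⟨i, hi⟩).2
    have := h1 i
    have := h1' (b ⟨i, hi⟩)
    omega

lemma om_eq : ω = ⟨-1/2, √3/2⟩ := by
  have h : (2 * (Real.pi : ℂ) * Complex.I / 3) = ((2 * Real.pi / 3 : ℝ) : ℂ) * Complex.I := by
    push_cast; ring
  have h2 : 2 * Real.pi / 3 = Real.pi - Real.pi / 3 := by ring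
  rw [ω, h, Complex.exp_mul_I, ← Complex.ofReal_cos, ← Complex.ofReal_sin, h2, Real.cos_pi_sub,
    Real.sin_pi_sub, Real.cos_pi_div_three, Real.sin_pi_div_three]
  apply Complex.ext <;> simp; norm_num

lemma om_conj : conj ω = -1 - ω := by
  rw [om_eq]; apply Complex.ext <;> simp; norm_num

lemma om_sq : ω * ω = -1 - ω := by
  have := Real.mul_self_sqrt (show (0:ℝ) ≤ 3 by norm_num)
  rw [om_eq]; apply Complex.ext <;> simp <;> nlinarith

def phi : E →+* ℂ where
  toFun z := z.re + z.im * ω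
  map_one' := by simp
  map_zero' := by simp
  map_add' a b := by simp; ring
  map_mul' a b := by
    simp; linear_combination -(a.im * b.im : ℂ) * om_sq

lemma phi_apply (z : E) : phi z = z.re + z.im * ω := rfl

lemma phi_cj (z : E) : phi (cj z) = conj (phi z) := by
  simp [phi_apply, om_conj]; ring

lemma phi_th : phi th = θ := by
  simp [phi_apply, θ, om_conj, th]; ring

lemma phi_inj : Function.Injective phi := by
  rw [injective_iff_map_eq_zero]
  intro z hz
  have h : phi (cj z * z) = 0 := by rw [map_mul, hz, mul_zero]
  rw [cj_mul, map_intCast] at h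
  exact nm_eq_zero.1 (by exact_mod_cast h)

lemma eisP_iff (z : ℂ) : EisP z ↔ ∃ e : E, phi e = z := by
  constructor
  · rintro ⟨a, b, rfl⟩; exact ⟨⟨a, b⟩, rfl⟩
  · rintro ⟨e, rfl⟩; exact ⟨e.re, e.im, rfl⟩

lemma eisUnit_phi (u : E) (hu : IsUnit u) : EisUnit (phi u) := by
  obtain ⟨v, hv⟩ := hu.exists_right_inv
  have h1 : nm u * nm v = 1 := by rw [← nm_mul, hv]; simp [nm]
  have h2 : nm u = 1 := by
    rcases Int.eq_one_or_neg_one_of_mul_eq_one h1 with h | h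
    · exact h
    · have := nm_nonneg u; omega
  obtain ⟨a, b⟩ := u
  simp only [nm] at h2
  have ha : a ≤ 1 := by nlinarith [sq_nonneg (a - 2 * b)]
  have ha' : -1 ≤ a := by nlinarith [sq_nonneg (a - 2 * b)]
  have hb : b ≤ 1 := by nlinarith [sq_nonneg (b - 2 * a)]
  have hb' : -1 ≤ b := by nlinarith [sq_nonneg (b - 2 * a)]
  have e2 : ω ^ 2 = -1 - ω := by rw [sq, om_sq]
  rw [EisUnit, e2, phi_apply]
  interval_cases a <;> interval_cases b <;> norm_num at h2 <;> simp
  · right; right; right; left; ring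
  · right; right; right; right; ring

lemma eisUnit_ex (z : ℂ) (hz : EisUnit z) : ∃ u v : E, phi u = z ∧ u * v = 1 := by
  have hw : phi ⟨0, 1⟩ = ω := by simp [phi_apply]
  have hw3 : (⟨0, 1⟩ : E) ^ 3 = 1 := rfl
  rcases hz with h | h | h | h | h | h
  · exact ⟨1, 1, by simp [h], by simp⟩
  · exact ⟨-1, -1, by simp [h], by simp⟩
  · exact ⟨⟨0, 1⟩, ⟨0, 1⟩ ^ 2, by simp [h, hw], rfl⟩
  · exact ⟨-⟨0, 1⟩, -⟨0, 1⟩ ^ 2, by rw [map_neg, hw, h], rfl⟩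
  · exact ⟨⟨0, 1⟩ ^ 2, ⟨0, 1⟩, by simp [h, hw], rfl⟩
  · exact ⟨-⟨0, 1⟩ ^ 2, -⟨0, 1⟩, by simp [h, hw], rfl⟩

def hf {k : ℕ} (M : Matrix (Fin k) (Fin k) E) (x : Fin k → E) : (Fin k → E) →ₗ[E] E where
  toFun y := (fun i => cj (x i)) ⬝ᵥ (M.mulVec y)
  map_add' a b := by rw [Matrix.mulVec_add, dotProduct_add]
  map_smul' c b := by rw [Matrix.mulVec_smul, dotProduct_smul]; rfl

lemma hf_apply {k : ℕ} (M : Matrix (Fin k) (Fin k) E) (x y : Fin k → E) :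
    hf M x y = (fun i => cj (x i)) ⬝ᵥ (M.mulVec y) := rfl

lemma hf_single {k : ℕ} (M : Matrix (Fin k) (Fin k) E) (i j : Fin k) :
    hf M (Pi.single i 1) (Pi.single j 1) = M i j := by
  have : (fun l => cj ((Pi.single i 1 : Fin k → E) l)) = Pi.single i 1 := by
    ext1 l; by_cases h : l = i
    · subst h; simp
    · simp [h]
  rw [hf_apply, this]; simp

def Bf {k : ℕ} (M : Matrix (Fin k) (Fin k) ℂ) (x y : Fin k → ℂ) : ℂ :=
  star x ⬝ᵥ (M.mulVec y)

lemma phi_hf {k : ℕ} (M : Matrix (Fin k) (Fin k) E) (x y : Fin k → E) :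
    phi (hf M x y) = Bf (M.map phi) (fun i => phi (x i)) (fun i => phi (y i)) := by
  simp [hf_apply, Bf, dotProduct, Matrix.mulVec, phi_cj, map_sum]

lemma hf_herm {k : ℕ} (M : Matrix (Fin k) (Fin k) E) (hM : ∀ i j, M j i = cj (M i j)) :
    IsHerm (hf M) := by
  refine ⟨fun x y => ?_⟩
  simp only [hf_apply, dotProduct, Matrix.mulVec, map_sum, map_mul, Finset.mul_sum]
  rw [Finset.sum_comm]
  refine Finset.sum_congr rfl fun i _ => Finset.sum_congr rfl fun j _ => ?_
  rw [← hM, cj_cj]; ring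

lemma hf_mod {k : ℕ} (M U V : Matrix (Fin k) (Fin k) E) (hM : ∀ i j, M j i = cj (M i j))
    (h1 : M * U = th • 1) (h2 : U * M = th • 1) (h3 : U * V = 1) : IsMod (hf M) := by
  have hMV : M = th • V := by
    calc M = M * (U * V) := by rw [h3, mul_one]
      _ = _ := by rw [← mul_assoc, h1, Matrix.smul_mul, one_mul]
  refine ⟨hf_herm M hM, ?_, ?_, ?_⟩
  · intro x y
    rw [hf_apply, hMV, Matrix.smul_mulVec, dotProduct_smul, smul_eq_mul]
    exact dvd_mul_right _ _
  · intro f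
    let r : Fin k → E := fun i => f (Pi.single i 1)
    refine ⟨fun i => cj (Matrix.vecMul r U i), fun y => ?_⟩
    have e1 : (fun i => cj (cj (Matrix.vecMul r U i))) = Matrix.vecMul r U := by
      ext1 i; rw [cj_cj]
    rw [hf_apply, e1, Matrix.dotProduct_mulVec, Matrix.vecMul_vecMul, h2, Matrix.vecMul_smul,
      Matrix.vecMul_one, smul_dotProduct, smul_eq_mul]
    congr 1
    rw [LinearMap.pi_apply_eq_sum_univ f y]
    simp only [dotProduct, smul_eq_mul]
    refine Finset.sum_congr rfl fun i _ => ?_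
    rw [mul_comm]
    have : (Pi.single i 1 : Fin k → E) = fun j => if i = j then 1 else 0 := by
      funext j; simp [Pi.single_apply, eq_comm]
    simp only [r, this]
  · intro x hx
    have e1 : Matrix.vecMul (fun i => cj (x i)) M = 0 := by
      ext1 j
      have := hx (Pi.single j 1)
      rw [hf_apply, Matrix.dotProduct_mulVec] at this
      simpa using this
    have e2 := congrArg (fun w => Matrix.vecMul w U) e1
    simp only [Matrix.vecMul_vecMul, h1, Matrix.vecMul_smul, Matrix.vecMul_one,
      Matrix.zero_vecMul] at e2
    ext1 i
    have e3 := congrFun e2 i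
    simp only [Pi.smul_apply, smul_eq_mul, Pi.zero_apply, mul_eq_zero, th_ne, false_or] at e3
    rw [← cj_cj (x i), e3, map_zero]; rfl

lemma lat_data {k : ℕ} (M : Matrix (Fin k) (Fin k) ℂ) (hM : SelfDualTheta M)
    (hd : IsUnit M.det) : ∃ M0 : Matrix (Fin k) (Fin k) E, M0.map phi = M ∧ IsMod (hf M0) := by
  obtain ⟨a, b, c, d⟩ := hM
  choose M0 hM0 using fun i j => (eisP_iff _).1 (a i j)
  choose U0 hU0 using fun i j => (eisP_iff _).1 (c i j)
  let M1 : Matrix (Fin k) (Fin k) E := Matrix.of M0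
  let U1 : Matrix (Fin k) (Fin k) E := Matrix.of U0
  have e1 : phi.mapMatrix M1 = M := by ext i j; exact hM0 i j
  have e2 : phi.mapMatrix U1 = θ • M⁻¹ := by ext i j; exact hU0 i j
  have inj : Function.Injective (phi.mapMatrix (m := Fin k)) := by
    intro A B hAB
    ext1 i j
    exact phi_inj (congrFun (congrFun hAB i) j)
  have e3 : phi.mapMatrix (th • (1 : Matrix (Fin k) (Fin k) E)) = θ • 1 := by
    rw [← phi_th]
    ext i j
    by_cases hij : i = j
    · subst hij; simp
    · simp [hij]
  obtain ⟨u, v, hu, huv⟩ := eisUnit_ex _ d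
  have hdet : U1.det = u := by
    apply phi_inj
    rw [RingHom.map_det, e2, hu]
  have hun : IsUnit U1.det := by rw [hdet]; exact IsUnit.of_mul_eq_one _ huv
  refine ⟨M1, e1, hf_mod M1 U1 U1⁻¹ ?_ ?_ ?_ (Matrix.mul_nonsing_inv _ hun)⟩
  · intro i j
    apply phi_inj
    rw [phi_cj]
    have := b.apply j i
    rw [← e1] at this
    exact this.symm
  · apply inj
    rw [map_mul, e1, e2, e3, Matrix.mul_smul, Matrix.mul_nonsing_inv _ hd]
  · apply inj
    rw [map_mul, e1, e2, e3, Matrix.smul_mul, Matrix.nonsing_inv_mul _ hd]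

lemma Bf_sum {k : ℕ} (M : Matrix (Fin k) (Fin k) ℂ) {ι : Type} [Fintype ι] [DecidableEq ι]
    (u : ι → Fin k → ℂ) (a : ι → ℝ) (h : ∀ i j, Bf M (u i) (u j) = if i = j then (a i : ℂ) else 0)
    (g : ι → ℂ) : (Bf M (∑ i, g i • u i) (∑ i, g i • u i)).re = ∑ i, Complex.normSq (g i) * a i := by
  have : Bf M (∑ i, g i • u i) (∑ i, g i • u i) =
      ∑ i, ∑ j, conj (g i) * g j * Bf M (u i) (u j) := by
    simp only [Bf, Matrix.mulVec_sum, star_sum, sum_dotProduct, dotProduct_sum, star_smul,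
      Matrix.mulVec_smul, smul_dotProduct, dotProduct_smul, smul_eq_mul]
    simp only [Finset.mul_sum, Complex.star_def]
    rw [Finset.sum_comm]
    refine Finset.sum_congr rfl fun i _ => ?_
    refine Finset.sum_congr rfl fun j _ => ?_
    ring
  rw [this]
  simp only [h, mul_ite, mul_zero, Finset.sum_ite_eq, Finset.mem_univ, if_true, Complex.re_sum]
  refine Finset.sum_congr rfl fun i _ => ?_
  rw [← Complex.normSq_eq_conj_mul_self, ← Complex.ofReal_mul, Complex.ofReal_re]

lemma Bf_neg {k : ℕ} (M : Matrix (Fin k) (Fin k) ℂ) (x : Fin k → ℂ) :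
    Bf M (-x) (-x) = Bf M x x := by
  simp [Bf, Matrix.mulVec_neg]

lemma sig_bound {k : ℕ} (M : Matrix (Fin k) (Fin k) ℂ) {ι κ : Type} [Fintype ι] [DecidableEq ι]
    [Fintype κ] [DecidableEq κ]
    (u : ι → Fin k → ℂ) (v : κ → Fin k → ℂ) (a : ι → ℝ) (b : κ → ℝ)
    (ha : ∀ i, 0 < a i) (hb : ∀ i, b i < 0)
    (hu : ∀ i j, Bf M (u i) (u j) = if i = j then (a i : ℂ) else 0)
    (hv : ∀ i j, Bf M (v i) (v j) = if i = j then (b i : ℂ) else 0) :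
    Fintype.card ι + Fintype.card κ ≤ k := by
  have hli : LinearIndependent ℂ (Sum.elim u v) := by
    rw [Fintype.linearIndependent_iff]
    intro g hg
    simp only [Fintype.sum_sum_type, Sum.elim_inl, Sum.elim_inr] at hg
    have e1 := Bf_sum M u a hu (fun i => g (Sum.inl i))
    have e2 := Bf_sum M v b hv (fun i => g (Sum.inr i))
    have e3 := eq_neg_of_add_eq_zero_left hg
    rw [e3, Bf_neg, e2] at e1
    have p1 : ∀ i ∈ Finset.univ, 0 ≤ Complex.normSq (g (Sum.inl i)) * a i :=
      fun i _ => mul_nonneg (Complex.normSq_nonneg _) (ha i).le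
    have p2 : ∀ i ∈ Finset.univ, Complex.normSq (g (Sum.inr i)) * b i ≤ 0 :=
      fun i _ => mul_nonpos_of_nonneg_of_nonpos (Complex.normSq_nonneg _) (hb i).le
    have s1 := Finset.sum_nonneg p1
    have s2 := Finset.sum_nonpos p2
    have z1 := (Finset.sum_eq_zero_iff_of_nonneg p1).1 (by linarith)
    have z2 := (Finset.sum_eq_zero_iff_of_nonpos p2).1 (by linarith)
    rintro (i | i)
    · have := z1 i (Finset.mem_univ _)
      rcases mul_eq_zero.1 this with h | h
      · exact Complex.normSq_eq_zero.1 h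
      · exact absurd h (ha i).ne'
    · have := z2 i (Finset.mem_univ _)
      rcases mul_eq_zero.1 this with h | h
      · exact Complex.normSq_eq_zero.1 h
      · exact absurd h (hb i).ne
  have := hli.fintype_card_le_finrank
  simpa using this

open Filter Topology in
lemma floor_lim (a : ℝ) : Tendsto (fun N : ℕ => (⌊(N + 1 : ℝ) * a⌋ : ℝ) / (N + 1)) atTop (𝓝 a) := by
  have h0 := tendsto_one_div_add_atTop_nhds_zero_nat (𝕜 := ℝ)
  have h1 : Tendsto (fun N : ℕ => a - 1 / ((N : ℝ) + 1)) atTop (𝓝 a) := by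
    simpa using tendsto_const_nhds.sub h0
  refine tendsto_of_tendsto_of_tendsto_of_le_of_le h1 tendsto_const_nhds ?_ ?_
  · intro N
    have hp : (0 : ℝ) < N + 1 := by positivity
    have := Int.lt_floor_add_one ((N + 1 : ℝ) * a)
    simp only
    rw [le_div_iff₀ hp, sub_mul, one_div, inv_mul_cancel₀ hp.ne']; linarith
  · intro N
    have hp : (0 : ℝ) < N + 1 := by positivity
    have := Int.floor_le ((N + 1 : ℝ) * a)
    simp only
    rw [div_le_iff₀ hp]; linarith

open Filter Topology in
lemma approx {k : ℕ} (x : Fin k → ℂ) : ∃ e : ℕ → Fin k → E,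
    Tendsto (fun N : ℕ => fun i => phi (e N i) / ((N : ℂ) + 1)) atTop (𝓝 x) := by
  have hs : √3 ≠ 0 := by positivity
  have hx : ∀ i, ∃ a b : ℝ, x i = a + b * ω := by
    intro i
    refine ⟨(x i).re + (x i).im / √3, 2 * (x i).im / √3, ?_⟩
    rw [om_eq]
    apply Complex.ext <;> simp <;> field_simp <;> ring
  choose a b hab using hx
  refine ⟨fun N i => ⟨⌊(N + 1 : ℝ) * a i⌋, ⌊(N + 1 : ℝ) * b i⌋⟩, ?_⟩
  rw [tendsto_pi_nhds]
  intro i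
  have h1 := (Complex.continuous_ofReal.tendsto _).comp (floor_lim (a i))
  have h2 := (Complex.continuous_ofReal.tendsto _).comp (floor_lim (b i))
  have h3 := h1.add (h2.mul_const ω)
  rw [hab]
  refine h3.congr fun N => ?_
  simp [phi_apply]; ring

open Filter Topology in
lemma exists_sign {k : ℕ} (M0 : Matrix (Fin k) (Fin k) E) (H : IsHerm (hf M0)) (s : ℤ)
    (x : Fin k → ℂ) (hx : 0 < s * (Bf (M0.map phi) x x).re) : ∃ y, 0 < s * qn (hf M0) y := by
  obtain ⟨e, he⟩ := approx x
  have hc : Continuous fun x : Fin k → ℂ => s * (Bf (M0.map phi) x x).re := by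
    unfold Bf dotProduct Matrix.mulVec dotProduct
    simp only [Pi.star_apply]
    fun_prop
  have h1 := (hc.tendsto x).comp he
  obtain ⟨N, hN⟩ := (h1.eventually (lt_mem_nhds hx)).exists
  refine ⟨e N, ?_⟩
  have h2 := phi_hf M0 (e N) (e N)
  rw [H.qn_eq, map_intCast] at h2
  have h3 : Bf (M0.map phi) (fun i => phi (e N i) / ((N : ℂ) + 1)) (fun i => phi (e N i) / ((N : ℂ) + 1))
      = ((1 / ((N : ℝ) + 1) ^ 2 * qn (hf M0) (e N) : ℝ) : ℂ) := by
    have : (fun i => phi (e N i) / ((N : ℂ) + 1)) = ((N : ℂ) + 1)⁻¹ • fun i => phi (e N i) := by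
      ext1 i; simp [div_eq_inv_mul]
    rw [this]
    have h4 : star (((N : ℂ) + 1)⁻¹) = ((N : ℂ) + 1)⁻¹ := by simp
    simp only [Bf, Matrix.mulVec_smul, star_smul, smul_dotProduct, dotProduct_smul, smul_eq_mul, h4]
    simp only [Bf] at h2
    rw [← h2]
    push_cast; rw [one_div, ← inv_pow]; ring
  simp only [Function.comp] at hN
  rw [h3, Complex.ofReal_re] at hN
  have hp : (0 : ℝ) < 1 / ((N : ℝ) + 1) ^ 2 := by positivity
  have : (0 : ℝ) < s * qn (hf M0) (e N) := by
    by_contra hcon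
    push Not at hcon
    have := mul_nonpos_of_nonneg_of_nonpos hp.le hcon
    linarith
  exact_mod_cast this

lemma Bf_col {k : ℕ} (M P : Matrix (Fin k) (Fin k) ℂ) (i j : Fin k) :
    Bf M (fun l => P l i) (fun l => P l j) = (P.conjTranspose * M * P) i j := by
  rw [Matrix.mul_assoc, Matrix.mul_apply]
  simp only [Bf, dotProduct, Matrix.conjTranspose_apply, Pi.star_apply]
  rfl

theorem over_data (m n : ℕ) (hm : 1 ≤ m) (hn : 1 ≤ n)
    (M : Matrix (Fin (m + n)) (Fin (m + n)) ℂ) (hM : SelfDualTheta M) (hMs : HasSignature m n M) :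
    ∃ (M0 : Matrix (Fin (m + n)) (Fin (m + n)) E) (S : Submodule E (Fin (m + n) → E))
      (kk : S → S →ₗ[E] E) (j : (Fin (m + n) → E) →ₗ[E] S), M0.map phi = M ∧ IsUni kk ∧
      Function.Injective j ∧ (∀ x y, kk (j x) (j y) = hf M0 x y) ∧ IsLag kk (LinearMap.range j) ∧
      (∃ e f, kk e e = 0 ∧ kk e f = 1) ∧
      ∃ (ι : Type) (_ : Fintype ι) (_ : DecidableEq ι) (B : Module.Basis ι E S) (ε : ι → ℤ),
        (∀ i, ε i = 1 ∨ ε i = -1) ∧ (∀ i j, kk (B i) (B j) = if i = j then (ε i : E) else 0) ∧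
        Fintype.card {i // ε i = 1} = m ∧ Fintype.card {i // ε i = -1} = n := by
  obtain ⟨P, hP, hPM⟩ := hMs
  have hd : IsUnit M.det := by
    have := congrArg Matrix.det hPM
    rw [Matrix.det_mul, Matrix.det_mul, Matrix.det_diagonal] at this
    rw [isUnit_iff_ne_zero]
    intro h0
    rw [h0, mul_zero, zero_mul] at this
    symm at this
    rw [Finset.prod_eq_zero_iff] at this
    obtain ⟨i, _, hi⟩ := this
    split_ifs at hi <;> simp at hi
  obtain ⟨M0, hM0, HM⟩ := lat_data M hM hd
  obtain ⟨S, kk, j, hu, hk3, hj, hkj, hlag⟩ := exists_over HM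
  have hinj : Function.Injective j := by
    intro x y hxy
    have := congrArg (fun z : S => (z : Fin (m + n) → E)) hxy
    simp only [hj] at this
    exact smul_right_injective _ th_ne this
  have hcol : ∀ a b, Bf M (fun l => P l a) (fun l => P l b) =
      if a = b then (if (a : ℕ) < m then (1 : ℂ) else -1) else 0 := by
    intro a b
    rw [Bf_col, hPM, Matrix.diagonal_apply]
  obtain ⟨x, hx⟩ := exists_sign M0 HM.toIsHerm 1 (fun l => P l (Fin.castAdd n ⟨0, hm⟩)) (by
    rw [hM0, hcol, if_pos rfl, if_pos (by change 0 < m; omega)]; simp)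
  obtain ⟨y, hy⟩ := exists_sign M0 HM.toIsHerm (-1) (fun l => P l (Fin.natAdd m ⟨0, hn⟩)) (by
    rw [hM0, hcol]; simp)
  have hqx : 0 < qn kk (j x) := by rw [qn, hkj]; simpa [qn] using hx
  have hqy : qn kk (j y) < 0 := by rw [qn, hkj]; simpa [qn] using hy
  have hhyp : ∃ e f, kk e e = 0 ∧ kk e f = 1 := by
    obtain ⟨v, hv, hvv⟩ := exists_iso hu _ _ hqx hqy
    exact exists_hyp hu v hv hvv
  refine ⟨M0, S, kk, j, hM0, hu, hinj, hkj, hlag, hhyp, ?_⟩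
  obtain ⟨ι, i1, i2, e, ε, h1, h2, h3⟩ := diag_aux _ S kk le_rfl hu ⟨_, hqx⟩ ⟨_, hqy⟩
  obtain ⟨B, hB⟩ := diag_basis e ε h1 h2 h3
  have h2' : ∀ i j, kk (B i) (B j) = if i = j then (ε i : E) else 0 := by
    intro i j; rw [hB, hB, h2]
  have hcard : Fintype.card ι = m + n := by
    rw [← Module.finrank_eq_card_basis B]
    have a1 := LinearMap.finrank_le_finrank_of_injective hinj
    have a2 := LinearMap.finrank_le_finrank_of_injective S.injective_subtype
    rw [Module.finrank_fin_fun] at a1 a2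
    omega
  have hb : ∀ a b, Bf M (fun l => phi ((B a : Fin (m + n) → E) l))
      (fun l => phi ((B b : Fin (m + n) → E) l)) = if a = b then ((3 * ε a : ℝ) : ℂ) else 0 := by
    intro a b
    rw [← hM0, ← phi_hf, ← hk3, h2']
    have h3 : phi 3 = 3 := map_ofNat phi 3
    split_ifs <;> simp [h3]
  have hsum : Fintype.card {i // ε i = 1} + Fintype.card {i // ε i = -1} = m + n := by
    rw [← hcard, ← Fintype.card_sum]
    have hm' : Fintype.card {i // ¬ ε i = 1} = Fintype.card {i // ε i = -1} := by
      apply Fintype.card_congr; apply Equiv.subtypeEquivRight; intro i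
      have := h1 i; omega
    rw [Fintype.card_sum, ← hm', ← Fintype.card_sum]
    exact Fintype.card_congr (Equiv.sumCompl (fun i => ε i = 1))
  have b1 := sig_bound M (fun i : {i // ε i = 1} => fun l => phi ((B i : Fin (m + n) → E) l))
    (fun i : Fin n => fun l => P l (Fin.natAdd m i)) (fun _ => 3) (fun _ => -1)
    (fun _ => by norm_num) (fun _ => by norm_num)
    (fun a b => by rw [hb, a.2]; simp [Subtype.ext_iff]) 
    (fun a b => by rw [hcol]; simp [Fin.ext_iff])
  have b2 := sig_bound M (fun i : Fin m => fun l => P l (Fin.castAdd n i))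
    (fun i : {i // ε i = -1} => fun l => phi ((B i : Fin (m + n) → E) l)) (fun _ => 1) (fun _ => -3)
    (fun _ => by norm_num) (fun _ => by norm_num)
    (fun a b => by rw [hcol]; simp [Fin.ext_iff])
    (fun a b => by rw [hb, a.2]; simp [Subtype.ext_iff])
  rw [Fintype.card_fin] at b1 b2
  exact ⟨ι, i1, i2, B, ε, h1, h2', by omega, by omega⟩

/-- There is at most one indefinite `ℰ`-lattice `T` of signature `(m,n)` (with
`m, n ≥ 1`), up to isometry, satisfying `T = θT′`: any two Gram matrices of such
lattices differ by a change of basis over `ℰ`. -/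
theorem stmt6 (m n : ℕ) (hm : 1 ≤ m) (hn : 1 ≤ n)
    (M N : Matrix (Fin (m + n)) (Fin (m + n)) ℂ)
    (hM : SelfDualTheta M) (hN : SelfDualTheta N)
    (hMs : HasSignature m n M) (hNs : HasSignature m n N) :
    ∃ P : Matrix (Fin (m + n)) (Fin (m + n)) ℂ,
      (∀ i j, EisP (P i j)) ∧ EisUnit P.det ∧ P.conjTranspose * M * P = N := by
  obtain ⟨N0, S, k, j, hN0, hu, hinj, hkj, hlag, -, ι, _, _, B, ε, h1, h2, hp, hq⟩ :=
    over_data m n hm hn N hN hNs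
  obtain ⟨M0, S', k', j', hM0, hu', hinj', hkj', hlag', ⟨e, f, hee, hef⟩, ι', _, _, B', ε', h1', h2',
    hp', hq'⟩ := over_data m n hm hn M hM hMs
  obtain ⟨σ, hσ⟩ := isom_of_sig ε ε' h1 h1' (by rw [hp, hp']) (by rw [hq, hq'])
  obtain ⟨g, hg⟩ := diag_isom hu.toIsHerm hu'.toIsHerm B B' ε ε' h2 h2' σ hσ
  obtain ⟨g2, hg2, hmap⟩ := lag_trans hu' e f hee hef (LinearMap.range j') hlag' _ _
    (hlag.map g hg) rfl
  let a : (Fin (m + n) → E) →ₗ[E] S' := (g2 : S' →ₗ[E] S').comp ((g : S →ₗ[E] S').comp j)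
  have ha : Function.Injective a := g2.injective.comp (g.injective.comp hinj)
  have hr : LinearMap.range a = LinearMap.range j' := by
    rw [← hmap, LinearMap.range_comp, LinearMap.range_comp]
  let ψ : (Fin (m + n) → E) ≃ₗ[E] (Fin (m + n) → E) :=
    (LinearEquiv.ofInjective a ha).trans
      ((LinearEquiv.ofEq _ _ hr).trans (LinearEquiv.ofInjective j' hinj').symm)
  have hψ : ∀ x, j' (ψ x) = a x := by
    intro x
    have : LinearEquiv.ofInjective j' hinj' (ψ x) =
        LinearEquiv.ofEq _ _ hr (LinearEquiv.ofInjective a ha x) := by simp [ψ]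
    exact congrArg Subtype.val this
  have hiso : ∀ x y, hf M0 (ψ x) (ψ y) = hf N0 x y := by
    intro x y
    rw [← hkj', hψ, hψ, ← hkj, ← hg]; exact hg2 _ _
  let P0 : Matrix (Fin (m + n)) (Fin (m + n)) E := LinearMap.toMatrix' (ψ : _ →ₗ[E] _)
  have hP0 : ∀ i l, P0 l i = ψ (Pi.single i 1) l := by
    intro i l
    simp [P0, LinearMap.toMatrix'_apply, Pi.single_apply]
  refine ⟨P0.map phi, fun i l => (eisP_iff _).2 ⟨_, rfl⟩, ?_, ?_⟩
  · have : (P0.map phi).det = phi P0.det := by rw [RingHom.map_det]; rfl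
    rw [this]
    apply eisUnit_phi
    rw [LinearMap.det_toMatrix']
    exact LinearEquiv.isUnit_det' ψ
  · ext i l
    rw [← Bf_col]
    simp only [Matrix.map_apply, hP0]
    rw [← hM0, ← phi_hf, hiso, hf_single, ← hN0]; rfl

end Bimonster
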